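/- In every 3-connected graph on n vertices, the circumference satisfies c ≥ min{n, 3δ − κ}, where δ is the minimum degree and κ the connectivity. -/

import Mathlib

open SimpleGraph

variable {V : Type*}

/-- `G` is `k`-connected: more than `k` vertices and removing fewer than `k`
vertices leaves a connected graph. -/
def KConnected (G : SimpleGraph V) [Fintype V] (k : ℕ) : Prop :=
  k < Fintype.card V ∧
    ∀ S : Finset V, S.card < k → (G.induce ((↑S : Set V)ᶜ)).Connected

/-- vertex connectivity `κ`. -/
noncomputable def connectivity (G : SimpleGraph V) [Fintype V] : ℕ :=
  sSup {k | KConnected G k}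

/-- independence number `α`. -/
noncomputable def indepNumber (G : SimpleGraph V) [Fintype V] : ℕ :=
  sSup {k | ∃ s : Finset V, (∀ u ∈ s, ∀ v ∈ s, ¬ G.Adj u v) ∧ s.card = k}

/-- circumference `c`: length of a longest cycle. -/
noncomputable def circumference (G : SimpleGraph V) [Fintype V] : ℕ :=
  sSup {n | ∃ (v : V) (w : G.Walk v v), w.IsCycle ∧ w.length = n}

/-- `w` is a longest cycle of `G`. -/
def IsLongestCycle {G : SimpleGraph V} {v : V} (w : G.Walk v v) : Prop :=
  w.IsCycle ∧ ∀ (u : V) (w' : G.Walk u u), w'.IsCycle → w'.length ≤ w.length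

/-- dominating cycle: every edge has an endpoint on the cycle. -/
def IsDominatingCycle {G : SimpleGraph V} {v : V} (w : G.Walk v v) : Prop :=
  w.IsCycle ∧ ∀ x y, G.Adj x y → x ∈ w.support ∨ y ∈ w.support

/-- generalized cycle of length `n` with vertex set `W`: single vertices are
cycles of length 1, edges are cycles of length 2. -/
def ExtCycle (G : SimpleGraph V) (W : Set V) (n : ℕ) : Prop :=
  (n = 1 ∧ ∃ v : V, W = {v}) ∨
  (n = 2 ∧ ∃ u v : V, G.Adj u v ∧ W = {u, v}) ∨
  (3 ≤ n ∧ ∃ (v : V) (w : G.Walk v v), w.IsCycle ∧ w.length = n ∧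
      W = {x | x ∈ w.support})

/-- `p̄`: the length of a longest path in `G \ C`. -/
noncomputable def pathBar (G : SimpleGraph V) [Fintype V] {v : V} (w : G.Walk v v) : ℕ :=
  sSup {n | ∃ (a b : {x : V | x ∉ w.support})
      (p : (G.induce {x : V | x ∉ w.support}).Walk a b), p.IsPath ∧ p.length = n}

/-- `c̄`: the length of a longest (generalized) cycle in `G \ C`. -/
noncomputable def cycBar (G : SimpleGraph V) [Fintype V] {v : V} (w : G.Walk v v) : ℕ :=
  sSup {n | ∃ W, ExtCycle (G.induce {x : V | x ∉ w.support}) W n}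

/-- `CD_m`-cycle: every (generalized) cycle of length at least `m` meets `w`. -/
def IsCDCycle (G : SimpleGraph V) {v : V} (w : G.Walk v v) (m : ℕ) : Prop :=
  w.IsCycle ∧ ∀ (W : Set V) (n : ℕ), ExtCycle G W n → m ≤ n → ∃ x ∈ W, x ∈ w.support

/-!
Fix a longest cycle `C`, of length `c`, and suppose it misses a vertex.

If `G - C` has no edge, take `x` off `C` and let `X` be the set of successors on `C` of the
neighbours of `x`. Since `C` is longest, `X ∪ {x}` is independent. If two vertices off `C` are
attached to consecutive vertices of `C`, rotating `C` gives `3δ ≤ c + 2`. Otherwise the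
neighbours of the vertices of `X` lie on `C`; taking `y` and `v` on different sides of a minimum
separating set and comparing `X`, `N(y)` and `N(v)` gives `3δ ≤ c + κ`.

If `G - C` has an edge, let `H` be a component of `G - C` with at least two vertices. Replacing an
arc of `C` between consecutive attachments of `H` by a detour through `H` shows that the arc is at
least two longer than any path of `H` joining the attached vertices. Long paths between prescribed
ends exist in `H`, or in its end blocks when it has a cut vertex, and 3-connectedness yields
enough arcs whose detours are long. Altogether `3δ ≤ c + 3`, and `3 ≤ κ`.
-/

section

variable {G : SimpleGraph V}

/-! ### Paths of prescribed length -/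

/-- There is a path of length `n` from `a` to `b` all of whose vertices lie in `W`. -/
def HasPath (G : SimpleGraph V) (W : Set V) (a b : V) (n : ℕ) : Prop :=
  ∃ p : G.Walk a b, p.IsPath ∧ p.length = n ∧ ∀ x ∈ p.support, x ∈ W

namespace HasPath

variable {W W' : Set V} {a b d : V} {m n : ℕ}

theorem refl (ha : a ∈ W) : HasPath G W a a 0 :=
  ⟨.nil, .nil, rfl, by simpa using ha⟩

theorem mono (h : HasPath G W a b n) (hW : W ⊆ W') : HasPath G W' a b n :=
  let ⟨p, hp, hn, hs⟩ := h
  ⟨p, hp, hn, fun x hx => hW (hs x hx)⟩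

theorem symm (h : HasPath G W a b n) : HasPath G W b a n :=
  let ⟨p, hp, hn, hs⟩ := h
  ⟨p.reverse, hp.reverse, by simpa using hn, fun x hx => hs x (by simpa using hx)⟩

theorem left_mem (h : HasPath G W a b n) : a ∈ W :=
  let ⟨p, _, _, hs⟩ := h
  hs a p.start_mem_support

theorem right_mem (h : HasPath G W a b n) : b ∈ W :=
  h.symm.left_mem

theorem pos (h : HasPath G W a b n) (hab : a ≠ b) : 0 < n := by
  obtain ⟨p, -, rfl, -⟩ := h
  exact Nat.pos_of_ne_zero fun h0 => hab (Walk.eq_of_length_eq_zero h0)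

theorem cons (h : HasPath G W b d n) (hab : G.Adj a b) (ha : a ∉ W) :
    HasPath G (insert a W) a d (n + 1) := by
  obtain ⟨p, hp, rfl, hs⟩ := h
  refine ⟨p.cons hab, hp.cons fun h => ha (hs a h), rfl, fun x hx => ?_⟩
  rw [Walk.support_cons, List.mem_cons] at hx
  exact hx.imp_right (hs x)

theorem trans (h : HasPath G W a b m) (h' : HasPath G W' b d n) (hW : W ∩ W' ⊆ {b}) :
    HasPath G (W ∪ W') a d (m + n) := by
  obtain ⟨p, hp, rfl, hps⟩ := h
  obtain ⟨q, hq, rfl, hqs⟩ := h'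
  refine ⟨p.append q, ?_, p.length_append q, fun x hx => ?_⟩
  · rw [Walk.isPath_def, Walk.support_append, List.nodup_append']
    refine ⟨hp.support_nodup, hq.support_nodup.tail, fun x hxp hxq => ?_⟩
    have hxb : x = b := hW ⟨hps x hxp, hqs x (List.mem_of_mem_tail hxq)⟩
    have hb := hq.support_nodup
    rw [← Walk.cons_tail_support, List.nodup_cons] at hb
    exact hb.1 (hxb ▸ hxq)
  · rw [Walk.mem_support_append_iff] at hx
    exact hx.imp (hps x) (hqs x)

theorem link {b' : V} (h : HasPath G W a b m) (h' : HasPath G W' b' d n) (hb : G.Adj b b')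
    (hW : Disjoint W W') : HasPath G (W ∪ W') a d (m + n + 1) := by
  have hbW' : b ∉ W' := hW.notMem_of_mem_left h.right_mem
  have hcons := h.trans (h'.cons hb hbW') fun x hx =>
    hx.2.resolve_right (hW.notMem_of_mem_left hx.1)
  exact hcons.mono (Set.union_subset Set.subset_union_left
    (Set.insert_subset (.inl h.right_mem) Set.subset_union_right))

end HasPath

theorem bddAbove_cycle_length (G : SimpleGraph V) [Finite V] :
    BddAbove {n | ∃ (v : V) (w : G.Walk v v), w.IsCycle ∧ w.length = n} := by
  have := Fintype.ofFinite V
  refine ⟨Fintype.card V, ?_⟩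
  rintro n ⟨v, w, hw, rfl⟩
  simpa using hw.support_nodup.length_le_card

theorem HasPath.lt_circumference [Fintype V] {W : Set V} {a b : V} {n : ℕ}
    (h : HasPath G W a b n) (hba : G.Adj b a) (hn : 2 ≤ n) : n < circumference G := by
  obtain ⟨p, hp, rfl, -⟩ := h
  have hcycle : (p.cons hba).IsCycle := by
    refine Walk.cons_isCycle_iff p hba |>.2 ⟨hp, fun he => ?_⟩
    have := hp.length_eq_one_of_mem_edges (Sym2.eq_swap ▸ he)
    omega
  exact le_csSup (bddAbove_cycle_length G) ⟨b, _, hcycle, rfl⟩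

/-! ### Connected vertex sets and the pieces cut off by one vertex -/

theorem induce_preconnected_iff_exists_adj {W : Set V} :
    (G.induce W).Preconnected ↔
      ∀ D ⊂ W, D.Nonempty → ∃ v ∈ D, ∃ u ∈ W \ D, G.Adj v u := by
  constructor
  · rintro h D hD ⟨a, ha⟩
    obtain ⟨b, hbW, hbD⟩ := Set.exists_of_ssubset hD
    obtain ⟨p⟩ := h ⟨a, hD.subset ha⟩ ⟨b, hbW⟩
    obtain ⟨e, -, he, he'⟩ := p.exists_boundary_dart {x | (x : V) ∈ D} ha hbD
    exact ⟨e.fst, he, e.snd, ⟨e.snd.2, he'⟩, e.adj⟩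
  · intro h a b
    by_contra hab
    let D : Set V := {v | ∃ hv : v ∈ W, (G.induce W).Reachable a ⟨v, hv⟩}
    have hbD : (b : V) ∉ D := fun ⟨_, hb⟩ => hab hb
    have hD : D ⊂ W := Set.ssubset_iff_subset_ne.2
      ⟨fun _ hv => hv.1, fun hDW => hbD (hDW.superset b.2)⟩
    obtain ⟨v, hvD, u, huD, hvu⟩ := h D hD ⟨a, a.2, .refl a⟩
    have hvu' : (G.induce W).Adj ⟨v, hvD.1⟩ ⟨u, huD.1⟩ := hvu
    exact huD.2 ⟨huD.1, hvD.2.trans hvu'.reachable⟩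

theorem exists_hasPath_of_preconnected {W : Set V} {a b : V} (h : (G.induce W).Preconnected)
    (ha : a ∈ W) (hb : b ∈ W) : ∃ n, HasPath G W a b n := by
  obtain ⟨p, hp⟩ := (h ⟨a, ha⟩ ⟨b, hb⟩).exists_isPath
  let f : G.induce W →g G := (Embedding.induce W).toHom
  have hmap : HasPath G W (f ⟨a, ha⟩) (f ⟨b, hb⟩) p.length := by
    refine ⟨p.map f, hp.map Subtype.val_injective, p.length_map f, fun x hx => ?_⟩
    rw [Walk.support_map, List.mem_map] at hx
    obtain ⟨y, -, rfl⟩ := hx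
    exact y.2
  exact ⟨_, hmap⟩

theorem induce_preconnected_of_subset_diff {W : Set V} (w : V)
    (h : ∀ D ⊆ W \ {w}, D.Nonempty → ∃ v ∈ D, ∃ u ∈ W \ D, G.Adj v u) :
    (G.induce W).Preconnected := by
  refine induce_preconnected_iff_exists_adj.2 fun D hD hne => ?_
  by_cases hwD : w ∈ D
  · obtain ⟨v, hv, u, hu, hvu⟩ := h (W \ D) (fun x hx => ⟨hx.1, fun hxw => hx.2 (hxw ▸ hwD)⟩)
      (Set.nonempty_of_ssubset hD)
    exact ⟨u, by_contra fun huD => hu.2 ⟨hu.1, huD⟩, v, hv, hvu.symm⟩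
  · exact h D (fun x hx => ⟨hD.subset hx, fun hxw => hwD (hxw ▸ hx)⟩) hne

/-- `D` is a nonempty part of `W` that is separated from the rest of `W` by the vertex `w`
(which does not belong to `D`) alone. -/
structure IsLobe (G : SimpleGraph V) (W D : Set V) (w : V) : Prop where
  subset : D ⊆ W
  nonempty : D.Nonempty
  mem : w ∈ W
  notMem : w ∉ D
  cut : ∀ v ∈ D, ∀ u ∈ W, G.Adj v u → u ∈ D ∨ u = w

/-- The vertex set `B` induces a connected graph without a cut vertex. -/
structure Nonseparable (G : SimpleGraph V) (B : Set V) : Prop where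
  preconnected : (G.induce B).Preconnected
  preconnected_diff : ∀ z ∈ B, (G.induce (B \ {z})).Preconnected

/-- A lobe `D` of `W` at `w` which, together with `w`, has no cut vertex; when `W` is connected
these are the end blocks of `W` without their cut vertices. -/
structure IsEndBlock (G : SimpleGraph V) (W D : Set V) (w : V) : Prop extends IsLobe G W D w where
  nonseparable : Nonseparable G (insert w D)

namespace IsLobe

variable {W D : Set V} {w : V}

theorem ssubset (h : IsLobe G W D w) : D ⊂ W :=
  ⟨h.subset, fun hWD => h.notMem (hWD h.mem)⟩

theorem preconnected_diff (h : IsLobe G W D w) (hW : (G.induce W).Preconnected) :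
    (G.induce (W \ D)).Preconnected := by
  refine induce_preconnected_of_subset_diff w fun Z hZ hne => ?_
  have hZW : Z ⊂ W := ⟨fun x hx => (hZ hx).1.1, fun hWZ => (hZ (hWZ h.mem)).2 rfl⟩
  obtain ⟨v, hv, u, ⟨huW, huZ⟩, hvu⟩ := induce_preconnected_iff_exists_adj.1 hW Z hZW hne
  refine ⟨v, hv, u, ⟨⟨huW, fun huD => ?_⟩, huZ⟩, hvu⟩
  rcases h.cut u huD v (hZ hv).1.1 hvu.symm with hvD | hvw
  · exact (hZ hv).1.2 hvD
  · exact (hZ hv).2 hvw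

theorem compl (h : IsLobe G W D w) (hW : insert w D ≠ W) : IsLobe G W (W \ insert w D) w where
  subset := Set.sdiff_subset
  nonempty := Set.nonempty_of_ssubset
    (Set.ssubset_iff_subset_ne.2 ⟨Set.insert_subset h.mem h.subset, hW⟩)
  mem := h.mem
  notMem hw := hw.2 (Set.mem_insert w D)
  cut v hv u hu hvu := by
    by_cases huw : u = w
    · exact .inr huw
    · refine .inl ⟨hu, fun huD => hv.2 ?_⟩
      exact (h.cut u (huD.resolve_left huw) v hv.1 hvu.symm).symm

theorem exists_adj (h : IsLobe G W D w) (hW : (G.induce W).Preconnected) :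
    ∃ v ∈ D, G.Adj v w := by
  obtain ⟨v, hv, u, ⟨huW, huD⟩, hvu⟩ :=
    induce_preconnected_iff_exists_adj.1 hW D h.ssubset h.nonempty
  exact ⟨v, hv, (h.cut v hv u huW hvu).resolve_left huD ▸ hvu⟩

theorem isEndBlock_of_minimal (h : IsLobe G W D w) (hW : (G.induce W).Preconnected)
    (hmin : ∀ Z ⊂ D, ∀ z, ¬ IsLobe G W Z z) : IsEndBlock G W D w := by
  have hclosed : ∀ v ∈ D, ∀ u ∈ W, G.Adj v u → u ∈ insert w D :=
    fun v hv u hu hvu => (h.cut v hv u hu hvu).symm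
  refine ⟨h, ?_, fun z hz => ?_⟩
  · refine induce_preconnected_of_subset_diff w fun Z hZ hne => ?_
    have hZD : Z ⊆ D := fun x hx => (hZ hx).1.resolve_left (hZ hx).2
    obtain ⟨v, hv, u, ⟨huW, huZ⟩, hvu⟩ :=
      induce_preconnected_iff_exists_adj.1 hW Z (hZD.trans_ssubset h.ssubset) hne
    exact ⟨v, hv, u, ⟨hclosed v (hZD hv) u huW hvu, huZ⟩, hvu⟩
  · obtain ⟨y, hyD⟩ : ∃ y, ∀ Z ⊆ (insert w D \ {z}) \ {y}, Z ⊂ D := by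
      rcases Set.mem_insert_iff.1 hz with rfl | hzD
      · obtain ⟨y, hy⟩ := h.nonempty
        exact ⟨y, fun Z hZ => ⟨fun x hx => (hZ hx).1.1.resolve_left (hZ hx).1.2,
          fun hDZ => (hZ (hDZ hy)).2 rfl⟩⟩
      · exact ⟨w, fun Z hZ => ⟨fun x hx => (hZ hx).1.1.resolve_left (hZ hx).2,
          fun hDZ => (hZ (hDZ hzD)).1.2 rfl⟩⟩
    refine induce_preconnected_of_subset_diff y fun Z hZ hne => ?_
    by_contra! hsep
    have hzW : z ∈ W := Set.insert_subset h.mem h.subset hz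
    refine hmin Z (hyD Z hZ) z ⟨(hyD Z hZ).subset.trans h.subset, hne, hzW,
      fun hzZ => (hZ hzZ).1.2 rfl, fun v hv u hu hvu => ?_⟩
    by_contra! hu'
    exact hsep v hv u ⟨⟨hclosed v ((hyD Z hZ).subset hv) u hu hvu, hu'.2⟩, hu'.1⟩ hvu

theorem exists_isEndBlock_subset [Finite V] (h : IsLobe G W D w)
    (hW : (G.induce W).Preconnected) : ∃ D' ⊆ D, ∃ w', IsEndBlock G W D' w' := by
  obtain ⟨D', hD', ⟨w', hw'⟩, hmin⟩ :=
    exists_minimal_le_of_wellFoundedLT (fun Z => ∃ z, IsLobe G W Z z) D ⟨w, h⟩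
  exact ⟨D', hD', w', hw'.isEndBlock_of_minimal hW
    fun Z hZ z hlobe => hZ.not_subset (hmin ⟨z, hlobe⟩ hZ.subset)⟩

end IsLobe

theorem exists_isLobe_of_not_nonseparable {H : Set V} (hH : (G.induce H).Preconnected)
    (hsep : ¬ Nonseparable G H) : ∃ D w, IsLobe G H D w ∧ insert w D ≠ H := by
  obtain ⟨z, hz, hHz⟩ : ∃ z ∈ H, ¬ (G.induce (H \ {z})).Preconnected := by
    by_contra! h
    exact hsep ⟨hH, h⟩
  rw [induce_preconnected_iff_exists_adj] at hHz
  push Not at hHz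
  obtain ⟨D, hD, hne, hcut⟩ := hHz
  refine ⟨D, z, ⟨hD.subset.trans Set.sdiff_subset, hne, hz, fun h => (hD.subset h).2 rfl,
    fun v hv u hu hvu => ?_⟩, fun h => ?_⟩
  · by_contra! hu'
    exact hcut v hv u ⟨⟨hu, hu'.2⟩, hu'.1⟩ hvu
  · obtain ⟨x, hx, hxD⟩ := Set.exists_of_ssubset hD
    exact (h.superset hx.1).elim hx.2 hxD

theorem exists_disjoint_isEndBlock [Finite V] {H : Set V} (hH : (G.induce H).Preconnected)
    (hsep : ¬ Nonseparable G H) :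
    ∃ D₁ w₁ D₂ w₂, IsEndBlock G H D₁ w₁ ∧ IsEndBlock G H D₂ w₂ ∧
      Disjoint D₁ D₂ ∧ w₁ ∉ D₂ ∧ w₂ ∉ D₁ := by
  obtain ⟨D, z, hD, hDH⟩ := exists_isLobe_of_not_nonseparable hH hsep
  obtain ⟨D₁, hD₁, w₁, h₁⟩ := hD.exists_isEndBlock_subset hH
  obtain ⟨D₂, hD₂, w₂, h₂⟩ := (hD.compl hDH).exists_isEndBlock_subset hH
  refine ⟨D₁, w₁, D₂, w₂, h₁, h₂, Set.disjoint_left.2 fun x hx hx' => ?_, fun hw => ?_,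
    fun hw => ?_⟩
  · exact (hD₂ hx').2 (.inr (hD₁ hx))
  · obtain ⟨v, hv, hvw⟩ := h₁.exists_adj hH
    exact (hD₂ hw).2 (hD.cut v (hD₁ hv) w₁ h₁.mem hvw).symm
  · obtain ⟨v, hv, hvw⟩ := h₂.exists_adj hH
    exact (hD₂ hv).2 (hD.cut w₂ (hD₁ hw) v (h₂.subset hv) hvw.symm).symm

theorem IsLobe.preconnected_diff_diff {H D₁ D₂ : Set V} {w₁ w₂ : V} (h₁ : IsLobe G H D₁ w₁)
    (h₂ : IsLobe G H D₂ w₂) (hH : (G.induce H).Preconnected) (hD : Disjoint D₁ D₂)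
    (hw₂ : w₂ ∉ D₁) : (G.induce ((H \ D₁) \ D₂)).Preconnected := by
  have hlobe : IsLobe G (H \ D₁) D₂ w₂ :=
    ⟨fun x hx => ⟨h₂.subset hx, hD.notMem_of_mem_right hx⟩, h₂.nonempty, ⟨h₂.mem, hw₂⟩,
      h₂.notMem, fun v hv u hu => h₂.cut v hv u hu.1⟩
  exact hlobe.preconnected_diff (h₁.preconnected_diff hH)

theorem Nonseparable.exists_isEndBlock_diff_singleton [Finite V] {B : Set V} {a w : V}
    (hB : Nonseparable G B) (ha : a ∈ B) (hw : w ∈ B) (haw : a ≠ w) (hBaw : ¬ B ⊆ {a, w}) :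
    ∃ D w', IsEndBlock G (B \ {a}) D w' ∧ w ∉ D ∧ ∃ a' ∈ D, G.Adj a a' := by
  have hlobe : IsLobe G (B \ {a}) (B \ {a, w}) w := by
    refine ⟨fun x hx => ⟨hx.1, fun h => hx.2 (.inl h)⟩, Set.sdiff_nonempty.2 hBaw,
      ⟨hw, haw.symm⟩, fun h => h.2 (.inr rfl), fun v _ u hu _ => ?_⟩
    by_cases huw : u = w
    · exact .inr huw
    · exact .inl ⟨hu.1, fun h => h.elim hu.2 huw⟩
  obtain ⟨D, hD, w', hD'⟩ := hlobe.exists_isEndBlock_subset (hB.preconnected_diff a ha)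
  refine ⟨D, w', hD', fun h => (hD h).2 (.inr rfl), ?_⟩
  have haD : a ∉ D := fun h => (hD'.subset h).2 rfl
  have hss : D ⊂ B \ {w'} :=
    ⟨fun x hx => ⟨(hD'.subset hx).1, fun h => hD'.notMem (h ▸ hx)⟩,
      fun h => haD (h ⟨ha, fun h => hD'.mem.2 h.symm⟩)⟩
  obtain ⟨v, hv, u, ⟨⟨huB, huw⟩, huD⟩, hvu⟩ := induce_preconnected_iff_exists_adj.1
    (hB.preconnected_diff w' hD'.mem.1) D hss hD'.nonempty
  have hua : u = a := by_contra fun hua => (hD'.cut v hv u ⟨huB, hua⟩ hvu).elim huD huw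
  exact ⟨v, hv, hua ▸ hvu.symm⟩

-- Erdős–Gallai: delete `a` and continue inside an end block of what remains, where all
-- degrees have dropped by at most one.
theorem Nonseparable.exists_hasPath_length_ge [Finite V] {B : Set V} {a w : V} {k : ℕ}
    (hB : Nonseparable G B) (ha : a ∈ B) (hw : w ∈ B) (haw : a ≠ w)
    (hdeg : ∀ v ∈ B, v ≠ w → k ≤ (G.neighborSet v ∩ B).ncard) :
    ∃ n, max 1 k ≤ n ∧ HasPath G B a w n := by
  induction k generalizing B a w with
  | zero =>
    obtain ⟨n, hn⟩ := exists_hasPath_of_preconnected hB.preconnected ha hw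
    exact ⟨n, hn.pos haw, hn⟩
  | succ k ih =>
    by_cases hBaw : B ⊆ {a, w}
    · obtain ⟨n, hn⟩ := exists_hasPath_of_preconnected hB.preconnected ha hw
      have hsub : G.neighborSet a ∩ B ⊆ {w} := fun x hx =>
        (hBaw hx.2).resolve_left (G.ne_of_adj hx.1).symm
      have hle := (hdeg a ha haw).trans (Set.ncard_le_ncard hsub)
      rw [Set.ncard_singleton] at hle
      exact ⟨n, max_le (hn.pos haw) (hle.trans (hn.pos haw)), hn⟩
    obtain ⟨D, w', hD, hwD, a', ha', haa'⟩ :=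
      hB.exists_isEndBlock_diff_singleton ha hw haw hBaw
    have haD : a ∉ D := fun h => (hD.subset h).2 rfl
    obtain ⟨n, hkn, hn⟩ := ih hD.nonseparable (.inr ha') (.inl rfl)
      (fun h => hD.notMem (h ▸ ha')) fun v hv hvw => by
        have hvD : v ∈ D := hv.resolve_left hvw
        have hsub : G.neighborSet v ∩ B ⊆ insert a (G.neighborSet v ∩ insert w' D) :=
          fun u hu => or_iff_not_imp_left.2 fun hua =>
            ⟨hu.1, (hD.cut v hvD u ⟨hu.2, hua⟩ hu.1).symm⟩
        have hdegv := hdeg v (hD.subset hvD).1 fun h => hwD (h ▸ hvD)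
        have := Set.ncard_le_ncard hsub
        have := Set.ncard_insert_le a (G.neighborSet v ∩ insert w' D)
        omega
    obtain ⟨m, hm⟩ := exists_hasPath_of_preconnected
      (hD.preconnected_diff (hB.preconnected_diff a ha)) ⟨hD.mem, hD.notMem⟩ ⟨⟨hw, haw.symm⟩, hwD⟩
    have hpath := (hn.trans hm fun x hx => hx.1.resolve_right hx.2.2).cons haa' (by
      rintro ((rfl | h) | h)
      exacts [hD.mem.2 rfl, haD h, h.1.2 rfl])
    refine ⟨n + m + 1, by omega, hpath.mono ?_⟩
    refine Set.insert_subset ha (Set.union_subset (Set.insert_subset hD.mem.1 ?_) ?_)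
    · exact hD.subset.trans Set.sdiff_subset
    · exact Set.sdiff_subset.trans Set.sdiff_subset

/-! ### Cycles enumerated periodically -/

/-- `f` runs periodically through the vertices of a cycle of length `c` in `G`; the vertex set of
the cycle is `Set.range f`. -/
structure IsCycleEnum (G : SimpleGraph V) (f : ℕ → V) (c : ℕ) : Prop where
  three_le : 3 ≤ c
  adj : ∀ i, G.Adj (f i) (f (i + 1))
  eq_iff : ∀ {i j}, f i = f j ↔ i ≡ j [MOD c]

/-- `f` runs periodically through the vertices of a longest cycle of `G`, of length `c`. -/
structure IsLongestCycleEnum (G : SimpleGraph V) [Fintype V] (f : ℕ → V) (c : ℕ) : Prop extends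
    IsCycleEnum G f c where
  circumference_le : circumference G ≤ c

/-- `d` is the length of the first return to `T` along `f`, starting at index `i`. -/
structure IsFirstReturn (f : ℕ → V) (T : Set V) (i d : ℕ) : Prop where
  pos : 0 < d
  mem : f (i + d) ∈ T
  notMem : ∀ e, 0 < e → e < d → f (i + e) ∉ T

namespace IsCycleEnum

variable {f : ℕ → V} {c i j : ℕ}

theorem eq_of_lt_add (h : IsCycleEnum G f c) (hij : f i = f j) (hi : i < j + c)
    (hj : j < i + c) : i = j := by
  refine Nat.ModEq.eq_of_abs_lt (h.eq_iff.1 hij) (abs_lt.2 ⟨?_, ?_⟩) <;> omega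

theorem apply_add_period (h : IsCycleEnum G f c) (i : ℕ) : f (i + c) = f i := by
  simp [h.eq_iff, Nat.ModEq]

theorem apply_add_right_inj (h : IsCycleEnum G f c) (a : ℕ) :
    f (i + a) = f (j + a) ↔ f i = f j := by
  rw [h.eq_iff, h.eq_iff, Nat.ModEq.add_iff_right rfl]

theorem exists_lt_apply_add_eq (h : IsCycleEnum G f c) (i j : ℕ) : ∃ e < c, f (i + e) = f j := by
  have hc : 0 < c := by have := h.three_le; omega
  refine ⟨(j + (c - i % c)) % c, Nat.mod_lt _ hc, ?_⟩
  rw [h.eq_iff, Nat.ModEq, Nat.add_mod_mod]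
  have hi := Nat.mod_lt i hc
  have hdiv := Nat.mod_add_div i c
  have : i + (j + (c - i % c)) = j + c * (i / c + 1) := by rw [Nat.mul_add]; omega
  rw [this, Nat.add_mul_mod_self_left]

theorem exists_mem_Icc_apply_eq (h : IsCycleEnum G f c) (i : ℕ) : ∃ j ∈ Set.Icc 1 c, f j = f i :=
  let ⟨e, he, hf⟩ := h.exists_lt_apply_add_eq 1 i
  ⟨1 + e, ⟨by omega, by omega⟩, hf⟩

theorem injOn_Icc (h : IsCycleEnum G f c) (s : ℕ) : Set.InjOn (fun i => f (i + s)) (Set.Icc 1 c) :=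
  fun i hi j hj hij => h.eq_of_lt_add ((h.apply_add_right_inj s).1 hij)
    (by have := hi.2; have := hj.1; omega) (by have := hi.1; have := hj.2; omega)

theorem ncard_range (h : IsCycleEnum G f c) : (Set.range f).ncard = c := by
  have hrange : Set.range f = f '' Set.Icc 1 c := by
    refine subset_antisymm ?_ (Set.image_subset_range f _)
    rintro _ ⟨i, rfl⟩
    exact h.exists_mem_Icc_apply_eq i
  rw [hrange, Set.InjOn.ncard_image (f := f) (h.injOn_Icc 0)]
  simp [← Nat.card_coe_set_eq]

theorem hasPath_arc (h : IsCycleEnum G f c) {s t : ℕ} (hst : s ≤ t) (hts : t < s + c) :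
    HasPath G (f '' Set.Icc s t) (f s) (f t) (t - s) := by
  induction t, hst using Nat.le_induction with
  | base => simpa using HasPath.refl (Set.mem_singleton (f s))
  | succ t hst ih =>
    have hdisj : Disjoint (f '' Set.Icc s t) {f (t + 1)} := by
      rw [Set.disjoint_singleton_right]
      rintro ⟨j, ⟨hsj, hjt⟩, hj⟩
      have := h.eq_of_lt_add hj (by omega) (by omega)
      omega
    have hlink := (ih (by omega)).link (.refl (Set.mem_singleton _)) (h.adj t) hdisj
    rw [show t + 1 - s = t - s + 0 + 1 by omega]
    refine hlink.mono (Set.union_subset (Set.image_mono ?_) ?_)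
    · exact Set.Icc_subset_Icc_right t.le_succ
    · exact Set.singleton_subset_iff.2 ⟨t + 1, ⟨by omega, le_rfl⟩, rfl⟩

theorem exists_isFirstReturn (h : IsCycleEnum G f c) {T : Set V} (hT : T ⊆ Set.range f)
    (hT2 : T.Nontrivial) (i : ℕ) : ∃ d < c, IsFirstReturn f T i d := by
  classical
  obtain ⟨v, hv, hne⟩ := hT2.exists_ne (f i)
  obtain ⟨j, rfl⟩ := hT hv
  obtain ⟨e, he, hej⟩ := h.exists_lt_apply_add_eq i j
  have hex : ∃ d, 0 < d ∧ f (i + d) ∈ T := by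
    refine ⟨e, Nat.pos_of_ne_zero ?_, hej ▸ hv⟩
    rintro rfl
    exact hne hej.symm
  have hle : Nat.find hex ≤ e := Nat.find_min' hex
    ⟨Nat.pos_of_ne_zero (by rintro rfl; exact hne hej.symm), hej ▸ hv⟩
  exact ⟨Nat.find hex, hle.trans_lt he, (Nat.find_spec hex).1, (Nat.find_spec hex).2,
    fun d hd hlt hdT => Nat.find_min hex hlt ⟨hd, hdT⟩⟩

theorem eq_and_eq_of_isFirstReturn (h : IsCycleEnum G f c) {T : Set V} {a b d : ℕ}
    (hj : IsFirstReturn f T j d) (hi : f i ∈ T) (hab : a ≤ b) (hbd : b < d)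
    (hf : f (i + a) = f (j + b)) : f i = f j ∧ a = b := by
  rw [show j + b = j + (b - a) + a by omega, h.apply_add_right_inj] at hf
  rcases Nat.eq_zero_or_pos (b - a) with hba | hba
  · exact ⟨by rwa [hba] at hf, by omega⟩
  · exact absurd (hf ▸ hi) (hj.notMem _ hba (by omega))

end IsCycleEnum

theorem IsLongestCycleEnum.length_add_two_le [Fintype V] {f : ℕ → V} {c s d n : ℕ} {W : Set V}
    {a b : V} (h : IsLongestCycleEnum G f c) (hd : 0 < d) (hdc : d < c)
    (hW : Disjoint W (Set.range f)) (hp : HasPath G W a b n) (ha : G.Adj (f s) a)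
    (hb : G.Adj b (f (s + d))) : n + 2 ≤ d := by
  have harc := h.hasPath_arc (show s + d ≤ s + c by omega) (by omega)
  rw [h.apply_add_period s] at harc
  have hlink := harc.link hp ha (hW.symm.mono_left (Set.image_subset_range f _))
  have hne : f (s + d) ≠ f s := fun hf => by
    have := h.eq_of_lt_add hf (by omega) (by omega)
    omega
  have := hlink.lt_circumference hb (by have := harc.pos hne; omega)
  have := h.circumference_le
  omega

/-- A set `T` of vertices divides a longest cycle with vertex set `C` and length `c` into arcs:
`next u` is the first vertex of `T` after `u` and `gap u` the length of the arc from `u` to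
`next u`. Replacing that arc by a detour outside of `C` must not give a longer cycle. -/
structure IsCyclicGaps (G : SimpleGraph V) (C : Set V) (c : ℕ) (T : Set V) (next : V → V)
    (gap : V → ℕ) : Prop where
  next_mem : ∀ u ∈ T, next u ∈ T
  length_add_two_le : ∀ {u a b : V} {W : Set V} {n : ℕ}, u ∈ T → Disjoint W C →
    HasPath G W a b n → G.Adj u a → G.Adj b (next u) → n + 2 ≤ gap u
  finsum_gap_le : ∑ᶠ u ∈ T, gap u ≤ c
  exists_next_notMem : ∀ P ⊂ T, P.Nonempty → ∃ u ∈ P, next u ∉ P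

namespace IsCycleEnum

variable {f : ℕ → V} {c : ℕ} {T : Set V} {ix : V → ℕ} {gap : V → ℕ}

theorem finsum_firstReturn_le [Finite V] (h : IsCycleEnum G f c) (hix : ∀ u ∈ T, f (ix u) = u)
    (hgap : ∀ u ∈ T, IsFirstReturn f T (ix u) (gap u)) : ∑ᶠ u ∈ T, gap u ≤ c := by
  have hsigma : ∑ᶠ u ∈ T, gap u =
      (T.toFinite.toFinset.sigma fun u => Finset.range (gap u)).card := by
    rw [finsum_mem_eq_finite_toFinset_sum _ T.toFinite, Finset.card_sigma]
    simp only [Finset.card_range]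
  rw [hsigma, ← Set.ncard_coe_finset, ← h.ncard_range]
  refine Set.ncard_le_ncard_of_injOn (fun p => f (ix p.1 + p.2))
    (fun p _ => Set.mem_range_self _) ?_
  have hinj : ∀ u ∈ T, ∀ v ∈ T, ∀ a b, a ≤ b → b < gap v → f (ix u + a) = f (ix v + b) →
      u = v ∧ a = b := by
    intro u hu v hv a b hab hb hf
    have := h.eq_and_eq_of_isFirstReturn (hgap v hv) ((hix u hu).symm ▸ hu) hab hb hf
    rwa [hix u hu, hix v hv] at this
  rintro ⟨u, a⟩ hp ⟨v, b⟩ hq hf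
  simp only [Finset.coe_sigma, Set.mem_sigma_iff, Set.Finite.coe_toFinset, Finset.coe_range,
    Set.mem_Iio] at hp hq hf
  rcases le_total a b with hab | hab
  · obtain ⟨rfl, rfl⟩ := hinj u hp.1 v hq.1 a b hab hq.2 hf
    rfl
  · obtain ⟨rfl, rfl⟩ := hinj v hq.1 u hp.1 b a hab hp.2 hf.symm
    rfl

theorem subset_of_firstReturn_closed (h : IsCycleEnum G f c) (hT : T ⊆ Set.range f)
    (hix : ∀ u ∈ T, f (ix u) = u) (hgap : ∀ u ∈ T, IsFirstReturn f T (ix u) (gap u))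
    {P : Set V} (hPT : P ⊆ T) (hP : P.Nonempty) (hclosed : ∀ u ∈ P, f (ix u + gap u) ∈ P) :
    T ⊆ P := by
  have hreach : ∀ e, ∀ u ∈ P, f (ix u + e) ∈ T → f (ix u + e) ∈ P := by
    intro e
    induction e using Nat.strong_induction_on with
    | _ e ih =>
    intro u hu heT
    have hret := hgap u (hPT hu)
    rcases Nat.lt_or_ge e (gap u) with hlt | hge
    · rcases Nat.eq_zero_or_pos e with rfl | hpos
      · exact (hix u (hPT hu)).symm ▸ hu
      · exact absurd heT (hret.notMem e hpos hlt)
    · have hu' := hclosed u hu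
      have hshift : f (ix (f (ix u + gap u)) + (e - gap u)) = f (ix u + e) := by
        rw [show ix u + e = ix u + gap u + (e - gap u) by omega, h.apply_add_right_inj]
        exact hix _ (hPT hu')
      have := hret.pos
      exact hshift ▸ ih (e - gap u) (by omega) _ hu' (hshift ▸ heT)
  obtain ⟨u, hu⟩ := hP
  intro v hv
  obtain ⟨j, rfl⟩ := hT hv
  obtain ⟨e, -, he⟩ := h.exists_lt_apply_add_eq (ix u) j
  exact he ▸ hreach e u hu (he ▸ hv)

end IsCycleEnum

theorem IsLongestCycleEnum.exists_isCyclicGaps [Fintype V] {f : ℕ → V} {c : ℕ} {T : Set V}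
    (h : IsLongestCycleEnum G f c) (hT : T ⊆ Set.range f) (hT2 : T.Nontrivial) :
    ∃ next gap, IsCyclicGaps G (Set.range f) c T next gap := by
  have hex : ∀ u ∈ T, ∃ i d, f i = u ∧ d < c ∧ IsFirstReturn f T i d := by
    intro u hu
    obtain ⟨i, rfl⟩ := hT hu
    obtain ⟨d, hd, hret⟩ := h.exists_isFirstReturn hT hT2 i
    exact ⟨i, d, rfl, hd, hret⟩
  choose! ix gap hix hlt hgap using hex
  refine ⟨fun u => f (ix u + gap u), gap, fun u hu => (hgap u hu).mem, ?_,
    h.finsum_firstReturn_le hix hgap, fun P hPT hP => ?_⟩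
  · intro u a b W n hu hW hp ha hb
    exact h.length_add_two_le (hgap u hu).pos (hlt u hu) hW hp ((hix u hu).symm ▸ ha) hb
  · by_contra! hclosed
    exact hPT.not_subset (h.subset_of_firstReturn_closed hT hix hgap hPT.subset hP hclosed)

/-! ### Dominating longest cycles -/

theorem IsCycleEnum.disjoint_arc {f : ℕ → V} {c s t s' t' : ℕ} (h : IsCycleEnum G f c)
    (hts : t < s') (hst : t' < s + c) : Disjoint (f '' Set.Icc s t) (f '' Set.Icc s' t') := by
  rw [Set.disjoint_left]
  rintro _ ⟨i, ⟨hsi, hit⟩, rfl⟩ ⟨j, ⟨hsj, hjt⟩, hij⟩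
  have := h.eq_of_lt_add hij (by omega) (by omega)
  omega

/-- The set of successors, on the cycle enumerated by `f`, of the vertices of `A`. -/
def succSet (f : ℕ → V) (A : Set V) : Set V :=
  (fun i => f (i + 1)) '' (f ⁻¹' A)

theorem succSet_subset_range (f : ℕ → V) (A : Set V) : succSet f A ⊆ Set.range f := by
  rintro _ ⟨i, -, rfl⟩
  exact Set.mem_range_self _

theorem IsCycleEnum.ncard_succSet {f : ℕ → V} {c : ℕ} (h : IsCycleEnum G f c) {A : Set V}
    (hA : A ⊆ Set.range f) : (succSet f A).ncard = A.ncard := by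
  have himage : ∀ s, (fun i => f (i + s)) '' (f ⁻¹' A) =
      (fun i => f (i + s)) '' (f ⁻¹' A ∩ Set.Icc 1 c) := fun s => by
    refine subset_antisymm ?_ (Set.image_mono Set.inter_subset_left)
    rintro _ ⟨i, hi, rfl⟩
    obtain ⟨j, hj, hji⟩ := h.exists_mem_Icc_apply_eq i
    exact ⟨j, ⟨by rwa [Set.mem_preimage, hji], hj⟩, (h.apply_add_right_inj s).2 hji⟩
  have hncard : ∀ s, ((fun i => f (i + s)) '' (f ⁻¹' A)).ncard = (f ⁻¹' A ∩ Set.Icc 1 c).ncard :=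
    fun s => by rw [himage s, ((h.injOn_Icc s).mono Set.inter_subset_right).ncard_image]
  calc (succSet f A).ncard = (f '' (f ⁻¹' A)).ncard := (hncard 1).trans (hncard 0).symm
    _ = A.ncard := by rw [Set.image_preimage_eq_of_subset hA]

namespace IsLongestCycleEnum

variable [Fintype V] {f : ℕ → V} {c : ℕ} {x z : V}

theorem not_adj_succ (h : IsLongestCycleEnum G f c) (hx : x ∉ Set.range f) {i : ℕ}
    (hi : G.Adj x (f i)) : ¬ G.Adj x (f (i + 1)) := fun hi' => by
  have := h.length_add_two_le one_pos (by have := h.three_le; omega)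
    (Set.disjoint_singleton_left.2 hx) (.refl (Set.mem_singleton x)) hi.symm hi'
  omega

theorem not_adj_succ_succ (h : IsLongestCycleEnum G f c) (hx : x ∉ Set.range f) {i j : ℕ}
    (hij : f i ≠ f j) (hi : G.Adj x (f i)) (hj : G.Adj x (f j)) :
    ¬ G.Adj (f (i + 1)) (f (j + 1)) := by
  intro hadj
  have := h.three_le
  obtain ⟨e, he, hf⟩ := h.exists_lt_apply_add_eq i j
  have he0 : 0 < e := Nat.pos_of_ne_zero (by rintro rfl; exact hij hf)
  rw [← (h.apply_add_right_inj 1).2 hf] at hadj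
  have hleft := (h.hasPath_arc (s := i + e + 1) (t := i + c) (by omega) (by omega)).symm
  have hright := h.hasPath_arc (s := i + 1) (t := i + e) (by omega) (by omega)
  have hall := (hleft.link hright hadj.symm
    (h.disjoint_arc (by omega) (by omega)).symm).link (.refl (Set.mem_singleton x))
    (hf.symm ▸ hj.symm) (Set.disjoint_singleton_right.2 fun hmem => hx
      (Set.union_subset (Set.image_subset_range _ _) (Set.image_subset_range _ _) hmem))
  have hlt := hall.lt_circumference ((h.apply_add_period i).symm ▸ hi) (by omega)
  have := h.circumference_le
  omega

theorem add_three_le_of_crossing (h : IsLongestCycleEnum G f c) (hx : x ∉ Set.range f)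
    (hz : z ∉ Set.range f) (hxz : x ≠ z) {s b j : ℕ} (hxs : G.Adj x (f s))
    (hzs : G.Adj z (f (s + 1))) (hxb : G.Adj x (f b)) (hzj : G.Adj z (f j)) (hsb : s < b)
    (hbj : b < j) (hj : j ≤ s + c) : b + 3 ≤ j := by
  have := h.three_le
  have hleft := (h.hasPath_arc (s := s + 1) (t := b) (by omega) (by omega)).symm
  have hright := h.hasPath_arc (s := j) (t := s + c) (by omega) (by omega)
  have hzarc : ∀ i k, Disjoint (f '' Set.Icc i k) {z} := fun i k =>
    Set.disjoint_singleton_right.2 fun hmem => hz (Set.image_subset_range _ _ hmem)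
  have hxarc : ∀ i k, x ∉ f '' Set.Icc i k := fun i k hmem =>
    hx (Set.image_subset_range _ _ hmem)
  have hall := ((hleft.link (.refl (Set.mem_singleton z)) hzs.symm (hzarc _ _)).link hright hzj
      (Set.disjoint_union_left.2 ⟨h.disjoint_arc hbj (by omega), (hzarc _ _).symm⟩)).link
    (.refl (Set.mem_singleton x)) ((h.apply_add_period s).symm ▸ hxs.symm)
    (Set.disjoint_singleton_right.2 (by
      rintro ((hmem | hmem) | hmem)
      exacts [hxarc _ _ hmem, hxz hmem, hxarc _ _ hmem]))
  have hlt := hall.lt_circumference hxb (by omega)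
  have := h.circumference_le
  omega

end IsLongestCycleEnum

theorem card_add_two_mul_card_le {s c : ℕ} {I J : Finset ℕ} (hI : I ⊆ Finset.Ioc s (s + c))
    (hJ : J ⊆ Finset.Ioc s (s + c)) (hsucc : ∀ j ∈ J, j + 1 ∉ J)
    (hcross : ∀ b ∈ I, ∀ j ∈ J, b < j → b + 3 ≤ j) : I.card + 2 * J.card ≤ c + 2 := by
  have hIcard : (I.image (· + 2)).card = I.card :=
    Finset.card_image_of_injective _ (add_left_injective 2)
  have hJcard : (J.image (· + 1)).card = J.card :=
    Finset.card_image_of_injective _ (add_left_injective 1)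
  have hIJ : Disjoint (I.image (· + 2)) (J.image (· + 1)) := by
    simp only [Finset.disjoint_left, Finset.mem_image, forall_exists_index, and_imp]
    rintro _ b hb rfl ⟨j, hj, hbj⟩
    have := hcross b hb j hj (by omega)
    omega
  have hIJJ : Disjoint (I.image (· + 2) ∪ J.image (· + 1)) J := by
    simp only [Finset.disjoint_left, Finset.mem_union, Finset.mem_image]
    rintro _ (⟨b, hb, rfl⟩ | ⟨j, hj, rfl⟩) hmem
    · have := hcross b hb _ hmem (by omega)
      omega
    · exact hsucc j hj hmem
  have hsub : (I.image (· + 2) ∪ J.image (· + 1)) ∪ J ⊆ Finset.Ioc s (s + c + 2) := by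
    intro y hy
    simp only [Finset.mem_union, Finset.mem_image] at hy
    rw [Finset.mem_Ioc]
    rcases hy with (⟨b, hb, rfl⟩ | ⟨j, hj, rfl⟩) | hy
    · have := Finset.mem_Ioc.1 (hI hb)
      omega
    · have := Finset.mem_Ioc.1 (hJ hj)
      omega
    · have := Finset.mem_Ioc.1 (hJ hy)
      omega
  have := Finset.card_le_card hsub
  rw [Finset.card_union_of_disjoint hIJJ, Finset.card_union_of_disjoint hIJ, hIcard, hJcard,
    Nat.card_Ioc] at this
  omega

open Classical in
theorem IsCycleEnum.le_card_filter_adj {f : ℕ → V} {c δ : ℕ} {x : V}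
    (h : IsCycleEnum G f c) (s : ℕ) (hx : G.neighborSet x ⊆ Set.range f)
    (hδ : δ ≤ (G.neighborSet x).ncard) :
    δ ≤ ((Finset.Ioc s (s + c)).filter fun i => G.Adj x (f i)).card := by
  rw [← Set.ncard_coe_finset]
  refine hδ.trans (le_trans (Set.ncard_le_ncard fun u hu => ?_) (Set.ncard_image_le (f := f)))
  obtain ⟨j, rfl⟩ := hx hu
  obtain ⟨e, he, hej⟩ := h.exists_lt_apply_add_eq (s + 1) j
  refine ⟨s + 1 + e, Finset.mem_coe.2 (Finset.mem_filter.2 ⟨?_, hej.symm ▸ hu⟩), hej⟩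
  rw [Finset.mem_Ioc]
  omega

theorem IsLongestCycleEnum.three_mul_le_of_adj_of_adj_succ [Fintype V] {f : ℕ → V} {c δ s : ℕ}
    {x z : V} (h : IsLongestCycleEnum G f c) (hdom : G.IsIndepSet (Set.range f)ᶜ)
    (hδ : ∀ v, δ ≤ (G.neighborSet v).ncard) (hx : x ∉ Set.range f) (hz : z ∉ Set.range f)
    (hxz : x ≠ z) (hxs : G.Adj x (f s)) (hzs : G.Adj z (f (s + 1))) : 3 * δ ≤ c + 2 := by
  classical
  have hN : ∀ {v}, v ∉ Set.range f → G.neighborSet v ⊆ Set.range f := fun hv u hu =>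
    by_contra fun huC => hdom hv huC (G.ne_of_adj hu) hu
  have hI := h.le_card_filter_adj s (hN hx) (hδ x)
  have hJ := h.le_card_filter_adj s (hN hz) (hδ z)
  have := card_add_two_mul_card_le (Finset.filter_subset (fun i => G.Adj x (f i)) _)
    (Finset.filter_subset (fun i => G.Adj z (f i)) (Finset.Ioc s (s + c)))
    (fun j hj hj' => h.not_adj_succ hz (Finset.mem_filter.1 hj).2 (Finset.mem_filter.1 hj').2)
    fun b hb j hj hbj => by
      rw [Finset.mem_filter, Finset.mem_Ioc] at hb hj
      exact h.add_three_le_of_crossing hx hz hxz hxs hzs hb.2 hj.2 hb.1.1 hbj hj.1.2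
  omega

/-- Removing `S` leaves no edge between the nonempty sets `A` and `B`, which together with `S`
cover the graph. -/
structure IsSeparation (G : SimpleGraph V) (S A B : Set V) : Prop where
  cover : ∀ v, v ∈ S ∨ v ∈ A ∨ v ∈ B
  disjoint : Disjoint A B
  not_adj : ∀ a ∈ A, ∀ b ∈ B, ¬ G.Adj a b
  nonempty_left : A.Nonempty
  nonempty_right : B.Nonempty

namespace IsSeparation

variable {S A B C X : Set V}

theorem symm (h : IsSeparation G S A B) : IsSeparation G S B A :=
  ⟨fun v => (h.cover v).imp_right Or.symm, h.disjoint.symm,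
    fun b hb a ha hba => h.not_adj a ha b hb hba.symm, h.nonempty_right, h.nonempty_left⟩

theorem mem_of_adj (h : IsSeparation G S A B) {v u : V} (hv : v ∈ B) (hvu : G.Adj v u)
    (hu : u ∉ B) : u ∈ S :=
  (h.cover u).resolve_right fun huAB =>
    huAB.elim (fun huA => h.not_adj u huA v hv hvu.symm) hu

theorem exists_neighborSet_inter_subset (h : IsSeparation G S A B) (hC : G.IsIndepSet Cᶜ)
    (hX : G.IsIndepSet X) (hXN : ∀ u ∈ X, G.neighborSet u ⊆ C) :
    ∃ v ∈ B, G.neighborSet v \ C ⊆ S ∧ G.neighborSet v ∩ X ⊆ S := by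
  by_cases hXB : ∃ z ∈ X, z ∈ B
  · obtain ⟨z, hzX, hzB⟩ := hXB
    exact ⟨z, hzB, fun u hu => absurd (hXN z hzX hu.1) hu.2,
      fun u hu => absurd hu.1 (hX hzX hu.2 (G.ne_of_adj hu.1))⟩
  push Not at hXB
  by_cases hBC : ∃ v ∈ B, v ∉ C
  · obtain ⟨v, hvB, hvC⟩ := hBC
    exact ⟨v, hvB, fun u hu => absurd hu.1 (hC hvC hu.2 (G.ne_of_adj hu.1)),
      fun u hu => h.mem_of_adj hvB hu.1 (hXB u hu.2)⟩
  · push Not at hBC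
    obtain ⟨v, hvB⟩ := h.nonempty_right
    exact ⟨v, hvB, fun u hu => h.mem_of_adj hvB hu.1 fun huB => hu.2 (hBC u huB),
      fun u hu => h.mem_of_adj hvB hu.1 (hXB u hu.2)⟩

-- Some `v ∈ B` has all its neighbours outside of `C` or in `X` inside `S`; for `y ∈ X ∩ A` the
-- disjoint sets `X` and `N(y)` then meet `N(v)` inside `C` only in `S`.
theorem three_mul_le_ncard_add [Finite V] (h : IsSeparation G S A B) (hC : G.IsIndepSet Cᶜ)
    (hX : G.IsIndepSet X) (hXC : X ⊆ C) (hXN : ∀ u ∈ X, G.neighborSet u ⊆ C) {y : V} (hyX : y ∈ X)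
    (hyA : y ∈ A) {δ : ℕ} (hδ : ∀ v, δ ≤ (G.neighborSet v).ncard) (hδX : δ ≤ X.ncard) :
    3 * δ ≤ C.ncard + S.ncard := by
  obtain ⟨v, hvB, hvC, hvX⟩ := h.exists_neighborSet_inter_subset hC hX hXN
  have hdisj : Disjoint X (G.neighborSet y) := Set.disjoint_left.2 fun u hu huy =>
    hX hyX hu (G.ne_of_adj huy) huy
  have hunion : X ∪ G.neighborSet y ∪ G.neighborSet v ∩ C ⊆ C :=
    Set.union_subset (Set.union_subset hXC (hXN y hyX)) Set.inter_subset_right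
  have hinter : (X ∪ G.neighborSet y) ∩ (G.neighborSet v ∩ C) ⊆ S ∩ C := by
    rintro u ⟨huX | huy, huv, huC⟩
    · exact ⟨hvX ⟨huv, huX⟩, huC⟩
    · exact ⟨h.mem_of_adj hvB huv fun huB => h.not_adj y hyA u huB huy, huC⟩
  have hout : G.neighborSet v \ C ⊆ S \ C := fun u hu => ⟨hvC hu, hu.2⟩
  have h₁ := Set.ncard_union_eq hdisj
  have h₂ := Set.ncard_union_add_ncard_inter (X ∪ G.neighborSet y) (G.neighborSet v ∩ C)
  have h₃ := Set.ncard_inter_add_ncard_sdiff_eq_ncard (G.neighborSet v) C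
  have h₄ := Set.ncard_inter_add_ncard_sdiff_eq_ncard S C
  have := Set.ncard_le_ncard hunion
  have := Set.ncard_le_ncard hinter
  have := Set.ncard_le_ncard hout
  have := hδ y
  have := hδ v
  omega

end IsSeparation

theorem IsLongestCycleEnum.three_mul_le_of_isIndepSet_compl [Fintype V] {f : ℕ → V} {c δ κ : ℕ}
    (h : IsLongestCycleEnum G f c) (hdom : G.IsIndepSet (Set.range f)ᶜ)
    (hne : Set.range f ≠ Set.univ) (hδ : ∀ v, δ ≤ (G.neighborSet v).ncard) (hκ : 2 ≤ κ)
    (hsep : δ ≤ κ ∨ ∃ S A B, S.ncard ≤ κ ∧ IsSeparation G S A B) : 3 * δ ≤ c + κ := by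
  obtain ⟨x, hx⟩ := (Set.ne_univ_iff_exists_notMem _).1 hne
  by_contra! hlt
  have hxN : G.neighborSet x ⊆ Set.range f := fun u hu =>
    by_contra fun huC => hdom hx huC (G.ne_of_adj hu) hu
  let X := succSet f (G.neighborSet x)
  have hδX : δ ≤ X.ncard := (hδ x).trans_eq (h.ncard_succSet hxN).symm
  have hXx : Disjoint X (G.neighborSet x) := Set.disjoint_left.2 (by
    rintro _ ⟨i, hi, rfl⟩ hi'
    exact h.not_adj_succ hx hi hi')
  have hXindep : G.IsIndepSet X := by
    rintro _ ⟨i, hi, rfl⟩ _ ⟨j, hj, rfl⟩ hne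
    exact h.not_adj_succ_succ hx (fun hij => hne ((h.apply_add_right_inj 1).2 hij)) hi hj
  have hXN : ∀ u ∈ X, G.neighborSet u ⊆ Set.range f := by
    rintro _ ⟨i, hi, rfl⟩ z hz
    by_contra hzC
    have hxz : x ≠ z := by
      rintro rfl
      exact h.not_adj_succ hx hi hz.symm
    have := h.three_mul_le_of_adj_of_adj_succ hdom hδ hx hzC hxz hi hz.symm
    omega
  have hXC : X ⊆ Set.range f := succSet_subset_range f _
  have htwo : 2 * δ ≤ c := by
    have := Set.ncard_le_ncard (Set.union_subset hXC hxN)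
    rw [Set.ncard_union_eq hXx, h.ncard_range] at this
    have := hδ x
    omega
  obtain hδκ | ⟨S, A, B, hS, hsep⟩ := hsep
  · omega
  obtain ⟨y, hyX, hyS⟩ : ∃ y ∈ X, y ∉ S := Set.not_subset.1 fun hXS => by
    have := Set.ncard_le_ncard hXS
    omega
  have := h.ncard_range
  rcases (hsep.cover y).resolve_left hyS with hyA | hyB
  · have := hsep.three_mul_le_ncard_add hdom hXindep hXC hXN hyX hyA hδ hδX
    omega
  · have := hsep.symm.three_mul_le_ncard_add hdom hXindep hXC hXN hyX hyB hδ hδX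
    omega

/-! ### Connectivity -/

theorem KConnected.preconnected_compl [Fintype V] {k : ℕ} {S : Set V} (h : KConnected G k)
    (hS : S.ncard < k) : (G.induce Sᶜ).Preconnected := by
  classical
  rw [← Set.coe_toFinset S]
  exact (h.2 _ (by rwa [← Set.ncard_eq_toFinset_card'])).preconnected

theorem KConnected.le_ncard_of_separates [Fintype V] {k : ℕ} {C D S : Set V} (h : KConnected G k)
    (hC : k ≤ C.ncard) (hDC : Disjoint D C) (hD : D.Nonempty)
    (hS : ∀ v ∈ D, ∀ u ∉ D, G.Adj v u → u ∈ S) : k ≤ S.ncard := by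
  by_contra! hlt
  obtain ⟨q, hqC, hqS⟩ : ∃ q ∈ C, q ∉ S := Set.not_subset.1 fun hCS => by
    have := Set.ncard_le_ncard hCS
    omega
  have hconn := h.preconnected_compl
    ((Set.ncard_le_ncard (Set.sdiff_subset (s := S) (t := D))).trans_lt hlt)
  have hss : D ⊂ (S \ D)ᶜ :=
    ⟨fun x hx hxS => hxS.2 hx, fun h => hDC.notMem_of_mem_right hqC (h fun hq => hqS hq.1)⟩
  obtain ⟨v, hv, u, ⟨hu, huD⟩, hvu⟩ := induce_preconnected_iff_exists_adj.1 hconn D hss hD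
  exact hu ⟨hS v hv u huD hvu, huD⟩

theorem KConnected.le_ncard_neighborSet [Fintype V] {k : ℕ} (h : KConnected G k) (v : V) :
    k ≤ (G.neighborSet v).ncard := by
  refine h.le_ncard_of_separates (C := {v}ᶜ) ?_ disjoint_compl_right (Set.singleton_nonempty v) ?_
  · rw [Set.ncard_compl, Set.ncard_singleton, Nat.card_eq_fintype_card]
    have := h.1
    omega
  · rintro _ rfl u - hvu
    exact hvu

theorem KConnected.le_connectivity [Fintype V] {k : ℕ} (h : KConnected G k) :
    k ≤ connectivity G :=
  le_csSup ⟨Fintype.card V, fun _ hm => hm.1.le⟩ h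

theorem exists_isSeparation_of_connectivity_lt [Fintype V]
    (hcard : connectivity G + 1 < Fintype.card V) :
    ∃ S A B, S.ncard ≤ connectivity G ∧ IsSeparation G S A B := by
  have hnot : ¬ KConnected G (connectivity G + 1) := fun h => by
    have := h.le_connectivity
    omega
  obtain ⟨S, hS, hconn⟩ : ∃ S : Finset V, S.card < connectivity G + 1 ∧
      ¬ (G.induce (S : Set V)ᶜ).Connected := by
    by_contra! h
    exact hnot ⟨hcard, h⟩
  have : Nonempty ((S : Set V)ᶜ : Set V) := by
    obtain ⟨v, -, hv⟩ := Finset.exists_mem_notMem_of_card_lt_card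
      (show S.card < Finset.univ.card by rw [Finset.card_univ]; omega)
    exact ⟨v, hv⟩
  have hpre : ¬ (G.induce (S : Set V)ᶜ).Preconnected := fun h => hconn ⟨h⟩
  rw [induce_preconnected_iff_exists_adj] at hpre
  push Not at hpre
  obtain ⟨A, hA, hne, hcut⟩ := hpre
  refine ⟨S, A, (S : Set V)ᶜ \ A, ?_, fun v => ?_, Set.disjoint_sdiff_right,
    fun a ha b hb => hcut a ha b hb, hne, Set.nonempty_of_ssubset hA⟩
  · rw [Set.ncard_coe_finset]
    omega
  · by_cases hvS : v ∈ (S : Set V)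
    · exact .inl hvS
    · by_cases hvA : v ∈ A
      · exact .inr (.inl hvA)
      · exact .inr (.inr ⟨hvS, hvA⟩)

theorem KConnected.nonseparable_univ [Fintype V] {k : ℕ} (h : KConnected G k) (hk : 2 ≤ k) :
    Nonseparable G Set.univ := by
  refine ⟨?_, fun z _ => ?_⟩
  · rw [← Set.compl_empty]
    exact h.preconnected_compl (by rw [Set.ncard_empty]; omega)
  · rw [← Set.compl_eq_univ_sdiff]
    exact h.preconnected_compl (by rw [Set.ncard_singleton]; omega)

theorem exists_isCycle_of_nonseparable_univ [Fintype V] [Nonempty V]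
    (h : Nonseparable G Set.univ) (hdeg : ∀ v, 2 ≤ (G.neighborSet v).ncard) :
    ∃ (v : V) (w : G.Walk v v), w.IsCycle ∧ w.length = circumference G := by
  obtain ⟨v⟩ := ‹Nonempty V›
  obtain ⟨a, ha⟩ : (G.neighborSet v).Nonempty :=
    Set.nonempty_of_ncard_ne_zero (by have := hdeg v; omega)
  obtain ⟨n, hn, hp⟩ := h.exists_hasPath_length_ge (Set.mem_univ v) (Set.mem_univ a)
    (G.ne_of_adj ha) fun u _ _ => by simpa using hdeg u
  have hpos := hp.lt_circumference ha.symm hn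
  refine Nat.sSup_mem (Set.nonempty_iff_ne_empty.2 fun hempty => ?_) (bddAbove_cycle_length G)
  rw [circumference, hempty, csSup_empty, bot_eq_zero] at hpos
  omega

theorem exists_isLongestCycleEnum_of_isCycle [Fintype V] {v : V} {w : G.Walk v v}
    (hw : w.IsCycle) (hlen : w.length = circumference G) :
    ∃ f, IsLongestCycleEnum G f (circumference G) := by
  have hthree := hw.three_le_length
  rw [← hlen]
  have hpos : 0 < w.length := by omega
  refine ⟨fun i => w.getVert (i % w.length), ⟨hthree, fun i => ?_, fun {i j} => ?_⟩, hlen.ge⟩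
  · have hi := Nat.mod_lt i hpos
    have hadj := w.adj_getVert_succ hi
    rcases Nat.lt_or_ge (i % w.length + 1) w.length with hlt | hge
    · have hmod : (i + 1) % w.length = i % w.length + 1 := by
        rw [← Nat.mod_add_mod, Nat.mod_eq_of_lt hlt]
      simpa only [hmod] using hadj
    · have hlast : i % w.length + 1 = w.length := by omega
      have hmod : (i + 1) % w.length = 0 := by rw [← Nat.mod_add_mod, hlast, Nat.mod_self]
      rw [hlast, w.getVert_length] at hadj
      simpa only [hmod, w.getVert_zero] using hadj
  · have hi := Nat.mod_lt i hpos
    have hj := Nat.mod_lt j hpos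
    exact ⟨fun h => hw.getVert_injOn' (Nat.le_pred_of_lt hi) (Nat.le_pred_of_lt hj) h,
      fun h => congrArg w.getVert h⟩

theorem KConnected.exists_isLongestCycleEnum [Fintype V] {k : ℕ} (h : KConnected G k)
    (hk : 2 ≤ k) : ∃ f, IsLongestCycleEnum G f (circumference G) := by
  have : Nonempty V := Fintype.card_pos_iff.1 (pos_of_gt h.1)
  obtain ⟨v, w, hw, hlen⟩ := exists_isCycle_of_nonseparable_univ (h.nonseparable_univ hk)
    fun v => hk.trans (h.le_ncard_neighborSet v)
  exact exists_isLongestCycleEnum_of_isCycle hw hlen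

/-! ### Components off a longest cycle -/

/-- `H` is the vertex set of a component of `G - C` that has at least two vertices. -/
structure IsNontrivialComponent (G : SimpleGraph V) (C H : Set V) : Prop where
  disjoint : Disjoint H C
  preconnected : (G.induce H).Preconnected
  nontrivial : H.Nontrivial
  mem_of_adj : ∀ v ∈ H, ∀ u ∉ C, G.Adj v u → u ∈ H

/-- The attachments of `D` on `C`: the vertices of `C` with a neighbour in `D`. -/
def attachments (G : SimpleGraph V) (C D : Set V) : Set V :=
  {u ∈ C | ∃ v ∈ D, G.Adj u v}

theorem exists_isNontrivialComponent [Finite V] {C : Set V} (hC : ¬ G.IsIndepSet Cᶜ) :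
    ∃ H, IsNontrivialComponent G C H := by
  obtain ⟨x, hx, y, hy, hxy⟩ : ∃ x ∉ C, ∃ y ∉ C, G.Adj x y := by
    by_contra! h
    exact hC fun x hx y hy _ => h x hx y hy
  obtain ⟨H, -, ⟨hxH, hdisj, hclosed⟩, hmin⟩ := exists_minimal_le_of_wellFoundedLT
    (fun Z : Set V => x ∈ Z ∧ Disjoint Z C ∧ ∀ v ∈ Z, ∀ u ∉ C, G.Adj v u → u ∈ Z) Cᶜ
    ⟨hx, disjoint_compl_left, fun _ _ u hu _ => hu⟩
  refine ⟨H, hdisj, induce_preconnected_of_subset_diff x fun D hD hne => ?_,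
    ⟨x, hxH, y, hclosed x hxH y hy hxy, G.ne_of_adj hxy⟩, hclosed⟩
  by_contra! hcut
  obtain ⟨v, hv⟩ := hne
  have hsub : H ≤ H \ D := hmin ⟨⟨hxH, fun h => (hD h).2 rfl⟩, hdisj.mono_left Set.sdiff_subset,
    fun z hz u hu hzu => ⟨hclosed z hz.1 u hu hzu, fun huD => hcut u huD z hz hzu.symm⟩⟩
    Set.sdiff_subset
  exact (hsub (hD hv).1).2 hv

namespace IsNontrivialComponent

variable {C H D : Set V} {w : V}

theorem neighborSet_subset (hH : IsNontrivialComponent G C H) (hD : IsLobe G H D w) {v : V}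
    (hv : v ∈ D) :
    G.neighborSet v ⊆ (G.neighborSet v ∩ insert w D) ∪ attachments G C D := fun u hu => by
  by_cases huC : u ∈ C
  · exact .inr ⟨huC, v, hv, hu.symm⟩
  · exact .inl ⟨hu, (hD.cut v hv u (hH.mem_of_adj v (hD.subset hv) u huC hu) hu).symm⟩

theorem two_le_ncard_attachments_of_isLobe [Fintype V] (hH : IsNontrivialComponent G C H)
    (hD : IsLobe G H D w) (h3 : KConnected G 3) (hC : 3 ≤ C.ncard) :
    2 ≤ (attachments G C D).ncard := by
  have := h3.le_ncard_of_separates (S := insert w (attachments G C D)) hC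
    (hH.disjoint.mono_left hD.subset) hD.nonempty fun v hv u hu hvu => by
      rcases hH.neighborSet_subset hD hv hvu with h | h
      · exact .inl (h.2.resolve_right hu)
      · exact .inr h
  have := Set.ncard_insert_le w (attachments G C D)
  omega

theorem three_le_ncard_attachments [Fintype V] (hH : IsNontrivialComponent G C H)
    (h3 : KConnected G 3) (hC : 3 ≤ C.ncard) : 3 ≤ (attachments G C H).ncard :=
  h3.le_ncard_of_separates hC hH.disjoint hH.nontrivial.nonempty fun v hv u hu hvu =>
    ⟨by_contra fun huC => hu (hH.mem_of_adj v hv u huC hvu), v, hv, hvu.symm⟩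

end IsNontrivialComponent

/-- Outside vertices `u` and `v` have neighbours in `H` that are joined by a path in `H` of length
at least `k`; so there is a path from `u` to `v` through `H` of length at least `k + 2`. -/
def HasDetour (G : SimpleGraph V) (H : Set V) (k : ℕ) (u v : V) : Prop :=
  ∃ a b n, k ≤ n ∧ HasPath G H a b n ∧ G.Adj u a ∧ G.Adj v b

theorem HasDetour.symm {H : Set V} {k : ℕ} {u v : V} (h : HasDetour G H k u v) :
    HasDetour G H k v u := by
  obtain ⟨a, b, n, hkn, hp, hua, hvb⟩ := h
  exact ⟨b, a, n, hkn, hp.symm, hvb, hua⟩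

/-- The vertices of `T` whose gap is at least `k + 2`, the length that a detour over a path of
length `k` forces. -/
def longGaps (T : Set V) (gap : V → ℕ) (k : ℕ) : Set V :=
  {u ∈ T | k + 2 ≤ gap u}

namespace IsCyclicGaps

variable {C H T P : Set V} {c k : ℕ} {next : V → V} {gap : V → ℕ} {u : V}

theorem mem_longGaps (h : IsCyclicGaps G C c T next gap) (hHC : Disjoint H C) (hu : u ∈ T)
    (hdet : HasDetour G H k u (next u)) : u ∈ longGaps T gap k := by
  obtain ⟨a, b, n, hkn, hp, hua, hvb⟩ := hdet
  have := h.length_add_two_le hu hHC hp hua hvb.symm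
  exact ⟨hu, by omega⟩

theorem exists_mem_longGaps_of_ssubset (h : IsCyclicGaps G C c T next gap) (hHC : Disjoint H C)
    (hP : P ⊂ T) (hne : P.Nonempty) (hdet : ∀ u ∈ P, ∀ v ∈ T \ P, HasDetour G H k u v) :
    ∃ u ∈ P, u ∈ longGaps T gap k := by
  obtain ⟨u, hu, hu'⟩ := h.exists_next_notMem P hP hne
  exact ⟨u, hu, h.mem_longGaps hHC (hP.subset hu) (hdet u hu _ ⟨h.next_mem u (hP.subset hu), hu'⟩)⟩

theorem two_le_ncard_longGaps [Finite V] (h : IsCyclicGaps G C c T next gap) (hHC : Disjoint H C)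
    (hP : P ⊂ T) (hne : P.Nonempty) (hdet : ∀ u ∈ P, ∀ v ∈ T \ P, HasDetour G H k u v) :
    2 ≤ (longGaps T gap k).ncard := by
  have hPc : T \ P ⊂ T :=
    ⟨Set.sdiff_subset, fun hT => hne.elim fun x hx => (hT (hP.subset hx)).2 hx⟩
  obtain ⟨u, hu, hu'⟩ := h.exists_mem_longGaps_of_ssubset hHC hP hne hdet
  obtain ⟨v, hv, hv'⟩ := h.exists_mem_longGaps_of_ssubset hHC hPc (Set.nonempty_of_ssubset hP)
    fun v hv u hu => (hdet u (not_not.1 fun huP => hu.2 ⟨hu.1, huP⟩) v hv).symm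
  exact (Set.one_lt_ncard (Set.toFinite _)).2 ⟨u, hu', v, hv', fun huv => hv.2 (huv ▸ hu)⟩

theorem longGaps_zero (h : IsCyclicGaps G C c T next gap) (hH : IsNontrivialComponent G C H)
    (hT : T ⊆ attachments G C H) : longGaps T gap 0 = T := by
  refine Set.Subset.antisymm (fun _ hu => hu.1) fun u hu => h.mem_longGaps hH.disjoint hu ?_
  obtain ⟨-, a, ha, hua⟩ := hT hu
  obtain ⟨-, b, hb, hub⟩ := hT (h.next_mem u hu)
  obtain ⟨n, hn⟩ := exists_hasPath_of_preconnected hH.preconnected ha hb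
  exact ⟨a, b, n, n.zero_le, hn, hua, hub⟩

theorem two_mul_ncard_add_le [Finite V] (h : IsCyclicGaps G C c T next gap)
    (hH : IsNontrivialComponent G C H) (hT : T ⊆ attachments G C H) (K L : ℕ) :
    2 * T.ncard + (longGaps T gap K).ncard * K + (longGaps T gap (K + L)).ncard * L ≤ c := by
  classical
  have hgap : ∀ u ∈ T, 2 ≤ gap u := fun u hu => by
    simpa using ((h.longGaps_zero hH hT).ge hu).2
  refine le_trans ?_ h.finsum_gap_le
  clear h hT
  lift T to Finset V using T.toFinite
  have hlong : ∀ k, longGaps (T : Set V) gap k = ({u ∈ T | k + 2 ≤ gap u} : Finset V) := fun k => by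
    simp only [longGaps, Finset.mem_coe, Finset.coe_filter]
  simp only [hlong, Set.ncard_coe_finset, Finset.mem_coe, finsum_mem_finset_eq_sum]
  calc 2 * T.card + ({u ∈ T | K + 2 ≤ gap u} : Finset V).card * K
        + ({u ∈ T | K + L + 2 ≤ gap u} : Finset V).card * L
      = ∑ u ∈ T, (2 + (if K + 2 ≤ gap u then K else 0) + if K + L + 2 ≤ gap u then L else 0) := by
        simp only [Finset.sum_add_distrib, ← Finset.sum_filter, Finset.sum_const, smul_eq_mul,
          mul_comm T.card]
    _ ≤ ∑ u ∈ T, gap u := Finset.sum_le_sum fun u hu => by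
        have := hgap u hu
        split_ifs <;> omega

end IsCyclicGaps

/-! ### Components with a cut vertex -/

theorem IsEndBlock.exists_hasPath_length_ge [Finite V] {W D : Set V} {a w : V} {k : ℕ}
    (h : IsEndBlock G W D w) (ha : a ∈ D)
    (hdeg : ∀ v ∈ D, k ≤ (G.neighborSet v ∩ insert w D).ncard) :
    ∃ n, max 1 k ≤ n ∧ HasPath G (insert w D) a w n :=
  h.nonseparable.exists_hasPath_length_ge (.inr ha) (.inl rfl) (fun haw => h.notMem (haw ▸ ha))
    fun v hv hvw => hdeg v (hv.resolve_left hvw)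

theorem exists_hasPath_of_isEndBlock [Finite V] {H D₁ D₂ : Set V} {w₁ w₂ a b : V} {k₁ k₂ : ℕ}
    (hH : (G.induce H).Preconnected) (h₁ : IsEndBlock G H D₁ w₁) (h₂ : IsEndBlock G H D₂ w₂)
    (hD : Disjoint D₁ D₂) (hw₁ : w₁ ∉ D₂) (hw₂ : w₂ ∉ D₁)
    (hdeg₁ : ∀ v ∈ D₁, k₁ ≤ (G.neighborSet v ∩ insert w₁ D₁).ncard)
    (hdeg₂ : ∀ v ∈ D₂, k₂ ≤ (G.neighborSet v ∩ insert w₂ D₂).ncard) (ha : a ∈ D₁) (hb : b ∈ D₂) :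
    ∃ n, max 1 k₁ + max 1 k₂ ≤ n ∧ HasPath G H a b n := by
  obtain ⟨n₁, hn₁, p₁⟩ := h₁.exists_hasPath_length_ge ha hdeg₁
  obtain ⟨n₂, hn₂, p₂⟩ := h₂.exists_hasPath_length_ge hb hdeg₂
  obtain ⟨m, p⟩ := exists_hasPath_of_preconnected
    (h₁.toIsLobe.preconnected_diff_diff h₂.toIsLobe hH hD hw₂)
    (a := w₁) (b := w₂) ⟨⟨h₁.mem, h₁.notMem⟩, hw₁⟩ ⟨⟨h₂.mem, hw₂⟩, h₂.notMem⟩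
  have hp := (p₁.trans p fun x hx => hx.1.resolve_right hx.2.1.2).trans p₂.symm fun x hx => by
    rcases hx with ⟨(rfl | hx₁) | hx, rfl | hx₂⟩
    · rfl
    · exact absurd hx₂ hw₁
    · rfl
    · exact absurd hx₂ (hD.notMem_of_mem_left hx₁)
    · rfl
    · exact absurd hx₂ hx.2
  refine ⟨n₁ + m + n₂, by omega, hp.mono ?_⟩
  exact Set.union_subset (Set.union_subset (Set.insert_subset h₁.mem h₁.subset)
    (Set.sdiff_subset.trans Set.sdiff_subset)) (Set.insert_subset h₂.mem h₂.subset)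

theorem IsNontrivialComponent.le_ncard_neighborSet_inter [Finite V] {C H D : Set V} {w : V} {δ : ℕ}
    (hH : IsNontrivialComponent G C H) (hD : IsLobe G H D w)
    (hδ : ∀ v, δ ≤ (G.neighborSet v).ncard) :
    ∀ v ∈ D, δ - (attachments G C D).ncard ≤ (G.neighborSet v ∩ insert w D).ncard := fun v hv => by
  have := hδ v
  have := Set.ncard_le_ncard (hH.neighborSet_subset hD hv)
  have := Set.ncard_union_le (G.neighborSet v ∩ insert w D) (attachments G C D)
  omega

theorem IsCyclicGaps.two_le_ncard_longGaps_union [Finite V] {C H T₁ T₂ : Set V} {c k : ℕ}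
    {next : V → V} {gap : V → ℕ} (h : IsCyclicGaps G C c (T₁ ∪ T₂) next gap) (hHC : Disjoint H C)
    (hT₁ : 2 ≤ T₁.ncard) (hT₂ : T₂.Nonempty)
    (hdet : ∀ u ∈ T₁, ∀ v ∈ T₂, HasDetour G H k u v) :
    2 ≤ (longGaps (T₁ ∪ T₂) gap k).ncard := by
  by_cases hT : Disjoint T₁ T₂
  · obtain ⟨x, hx⟩ := hT₂
    exact h.two_le_ncard_longGaps hHC
      ⟨Set.subset_union_left, fun hsub => hT.notMem_of_mem_right hx (hsub (.inr hx))⟩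
      (Set.nonempty_of_ncard_ne_zero (by omega))
      fun u hu v hv => hdet u hu v (hv.1.resolve_left hv.2)
  · obtain ⟨u, hu₁, hu₂⟩ := Set.not_disjoint_iff.1 hT
    refine h.two_le_ncard_longGaps (P := {u}) hHC
      ⟨Set.singleton_subset_iff.2 (.inl hu₁), fun hsub => ?_⟩ (Set.singleton_nonempty u) ?_
    · have := Set.ncard_le_ncard (Set.subset_union_left.trans hsub)
      rw [Set.ncard_singleton] at this
      omega
    · rintro _ rfl v ⟨hv | hv, -⟩
      · exact (hdet v hv _ hu₂).symm
      · exact hdet _ hu₁ v hv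

theorem IsCyclicGaps.inter_subset_longGaps {C H T₁ T₂ : Set V} {c k : ℕ} {next : V → V}
    {gap : V → ℕ} (h : IsCyclicGaps G C c (T₁ ∪ T₂) next gap) (hHC : Disjoint H C)
    (hdet : ∀ u ∈ T₁, ∀ v ∈ T₂, HasDetour G H k u v) :
    T₁ ∩ T₂ ⊆ longGaps (T₁ ∪ T₂) gap k := fun u hu => by
  refine h.mem_longGaps hHC (.inl hu.1) ?_
  rcases h.next_mem u (.inl hu.1) with hn | hn
  · exact (hdet _ hn u hu.2).symm
  · exact hdet u hu.1 _ hn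

theorem IsLongestCycleEnum.three_mul_le_of_not_nonseparable [Fintype V] {f : ℕ → V} {c δ : ℕ}
    {H : Set V} (h : IsLongestCycleEnum G f c) (hH : IsNontrivialComponent G (Set.range f) H)
    (h3 : KConnected G 3) (hδ : ∀ v, δ ≤ (G.neighborSet v).ncard) (hsep : ¬ Nonseparable G H) :
    3 * δ ≤ c + 3 := by
  have hC : 3 ≤ (Set.range f).ncard := h.ncard_range ▸ h.three_le
  obtain ⟨D₁, w₁, D₂, w₂, h₁, h₂, hD, hw₁, hw₂⟩ := exists_disjoint_isEndBlock hH.preconnected hsep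
  have two_le₁ := hH.two_le_ncard_attachments_of_isLobe h₁.toIsLobe h3 hC
  have two_le₂ := hH.two_le_ncard_attachments_of_isLobe h₂.toIsLobe h3 hC
  have hdeg₁ := hH.le_ncard_neighborSet_inter h₁.toIsLobe hδ
  have hdeg₂ := hH.le_ncard_neighborSet_inter h₂.toIsLobe hδ
  set T₁ := attachments G (Set.range f) D₁
  set T₂ := attachments G (Set.range f) D₂
  have hT : T₁ ∪ T₂ ⊆ attachments G (Set.range f) H := by
    rintro u (⟨huC, v, hv, huv⟩ | ⟨huC, v, hv, huv⟩)
    · exact ⟨huC, v, h₁.subset hv, huv⟩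
    · exact ⟨huC, v, h₂.subset hv, huv⟩
  obtain ⟨next, gap, hgap⟩ := h.exists_isCyclicGaps (hT.trans fun u hu => hu.1)
    ((Set.one_lt_ncard_iff_nontrivial.1 two_le₁).mono Set.subset_union_left)
  have hdet : ∀ u ∈ T₁, ∀ v ∈ T₂,
      HasDetour G H (max 1 (δ - T₁.ncard) + max 1 (δ - T₂.ncard)) u v := by
    rintro u ⟨-, a, ha, hua⟩ v ⟨-, b, hb, hvb⟩
    obtain ⟨n, hn, hp⟩ := exists_hasPath_of_isEndBlock hH.preconnected h₁ h₂ hD hw₁ hw₂ hdeg₁ hdeg₂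
      ha hb
    exact ⟨a, b, n, hn, hp, hua, hvb⟩
  have hX := hgap.two_le_ncard_longGaps_union hH.disjoint two_le₁
    (Set.nonempty_of_ncard_ne_zero (by omega)) hdet
  have hI := Set.ncard_le_ncard (hgap.inter_subset_longGaps hH.disjoint hdet)
  have hsum := hgap.two_mul_ncard_add_le hH hT (max 1 (δ - T₁.ncard) + max 1 (δ - T₂.ncard)) 0
  have hunion := Set.ncard_union_add_ncard_inter T₁ T₂
  obtain ⟨K, hK⟩ := Nat.exists_eq_add_of_le' (show 2 ≤ max 1 (δ - T₁.ncard) +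
    max 1 (δ - T₂.ncard) by omega)
  obtain ⟨g, hg⟩ := Nat.exists_eq_add_of_le' hX
  rw [hg, hK, show (g + 2) * (K + 2) = g * K + 2 * g + 2 * K + 4 by ring] at hsum
  have := Nat.zero_le (g * K)
  omega

/-! ### Components without a cut vertex -/

/-- The attachments of `H` on `C` whose only neighbour in `H` is `a`. -/
def privateAttachments (G : SimpleGraph V) (C H : Set V) (a : V) : Set V :=
  {u ∈ C | G.neighborSet u ∩ H = {a}}

/-- The attachments of `H` on `C` with at least two neighbours in `H`. -/
def multiAttachments (G : SimpleGraph V) (C H : Set V) : Set V :=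
  {u ∈ C | (G.neighborSet u ∩ H).Nontrivial}

section Attachments

variable {C H : Set V} {a b u v : V}

theorem mem_of_mem_privateAttachments (hu : u ∈ privateAttachments G C H a) :
    a ∈ G.neighborSet u ∩ H :=
  hu.2 ▸ Set.mem_singleton a

theorem privateAttachments_subset : privateAttachments G C H a ⊆ attachments G C H := fun _ hu =>
  have ha := mem_of_mem_privateAttachments hu
  ⟨hu.1, a, ha.2, ha.1⟩

theorem multiAttachments_subset : multiAttachments G C H ⊆ attachments G C H := fun _ hu =>
  have ⟨v, hv⟩ := hu.2.nonempty
  ⟨hu.1, v, hv.2, hv.1⟩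

theorem mem_multiAttachments_or_privateAttachments (hu : u ∈ C) (hv : v ∈ H) (huv : G.Adj u v) :
    u ∈ multiAttachments G C H ∪ privateAttachments G C H v := by
  by_cases hnon : (G.neighborSet u ∩ H).Nontrivial
  · exact .inl ⟨hu, hnon⟩
  · exact .inr ⟨hu, (Set.not_nontrivial_iff.1 hnon).eq_singleton_of_mem ⟨huv, hv⟩⟩

theorem exists_ne_adj_of_notMem_privateAttachments (hu : u ∈ attachments G C H)
    (hua : u ∉ privateAttachments G C H a) : ∃ b ∈ H, b ≠ a ∧ G.Adj u b := by
  obtain ⟨huC, v, hv, huv⟩ := hu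
  by_contra! hb
  exact hua ⟨huC, Set.eq_singleton_iff_unique_mem.2
    ⟨by_contra fun ha => hb v hv (fun hva => ha (hva ▸ ⟨huv, hv⟩)) huv,
      fun b hbH => by_contra fun hba => hb b hbH.2 hba hbH.1⟩⟩

theorem disjoint_multiAttachments_privateAttachments :
    Disjoint (multiAttachments G C H) (privateAttachments G C H a) :=
  Set.disjoint_left.2 fun _ hu hu' => Set.not_nontrivial_singleton (hu'.2 ▸ hu.2)

theorem disjoint_privateAttachments (hab : a ≠ b) :
    Disjoint (privateAttachments G C H a) (privateAttachments G C H b) :=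
  Set.disjoint_left.2 fun _ hu hu' => hab (Set.singleton_injective (hu.2.symm.trans hu'.2))

theorem ncard_multiAttachments_add_le [Finite V] (hab : a ≠ b) :
    (multiAttachments G C H).ncard + (privateAttachments G C H a).ncard +
      (privateAttachments G C H b).ncard ≤ (attachments G C H).ncard := by
  rw [← Set.ncard_union_eq disjoint_multiAttachments_privateAttachments,
    ← Set.ncard_union_eq (disjoint_multiAttachments_privateAttachments.union_left
      (disjoint_privateAttachments hab))]
  exact Set.ncard_le_ncard (Set.union_subset (Set.union_subset multiAttachments_subset
    privateAttachments_subset) privateAttachments_subset)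

end Attachments

namespace IsNontrivialComponent

variable {C H : Set V} {a b v : V} {δ p : ℕ}

theorem ncard_neighborSet_le [Finite V] (hH : IsNontrivialComponent G C H) (hv : v ∈ H) :
    (G.neighborSet v).ncard ≤ (G.neighborSet v ∩ H).ncard + (multiAttachments G C H).ncard +
      (privateAttachments G C H v).ncard := by
  have hsub : G.neighborSet v ⊆
      G.neighborSet v ∩ H ∪ (multiAttachments G C H ∪ privateAttachments G C H v) := fun u hu => by
    by_cases huC : u ∈ C
    · exact .inr (mem_multiAttachments_or_privateAttachments huC hv hu.symm)
    · exact .inl ⟨hu, hH.mem_of_adj v hv u huC hu⟩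
  have := Set.ncard_le_ncard hsub
  have := Set.ncard_union_le (G.neighborSet v ∩ H)
    (multiAttachments G C H ∪ privateAttachments G C H v)
  have := Set.ncard_union_le (multiAttachments G C H) (privateAttachments G C H v)
  omega

theorem privateAttachments_ssubset [Fintype V] (hH : IsNontrivialComponent G C H)
    (h3 : KConnected G 3) (hC : 3 ≤ C.ncard) :
    privateAttachments G C H a ⊂ attachments G C H := by
  refine ⟨privateAttachments_subset, fun hsub => ?_⟩
  obtain ⟨b, hb, hba⟩ := hH.nontrivial.exists_ne a
  have := h3.le_ncard_of_separates (S := {a}) hC (hH.disjoint.mono_left Set.sdiff_subset)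
    ⟨b, hb, hba⟩ fun v hv u hu hvu => by
      by_contra hua
      refine hu ⟨hH.mem_of_adj v hv.1 u (fun huC => hv.2 ?_) hvu, hua⟩
      have := (hsub ⟨huC, v, hv.1, hvu.symm⟩).2
      exact this ▸ (⟨hvu.symm, hv.1⟩ : v ∈ G.neighborSet u ∩ H)
  rw [Set.ncard_singleton] at this
  omega

theorem three_le_ncard_multiAttachments_add [Fintype V] (hH : IsNontrivialComponent G C H)
    (h3 : KConnected G 3) (hC : 3 ≤ C.ncard) (hH3 : 3 ≤ H.ncard) :
    3 ≤ (multiAttachments G C H).ncard +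
      {a ∈ H | (privateAttachments G C H a).Nonempty}.ncard := by
  set A := {a ∈ H | (privateAttachments G C H a).Nonempty}
  by_contra! hlt
  have hD : (H \ A).Nonempty := Set.sdiff_nonempty_of_ncard_lt_ncard (by omega)
  have := h3.le_ncard_of_separates (S := multiAttachments G C H ∪ A) hC
    (hH.disjoint.mono_left Set.sdiff_subset) hD fun v hv u hu hvu => by
      by_cases huC : u ∈ C
      · rcases mem_multiAttachments_or_privateAttachments huC hv.1 hvu.symm with hm | hp
        · exact .inl hm
        · exact absurd ⟨hv.1, u, hp⟩ hv.2
      · exact .inr (by_contra fun huA => hu ⟨hH.mem_of_adj v hv.1 u huC hvu, huA⟩)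
  have := Set.ncard_union_le (multiAttachments G C H) A
  omega

theorem exists_hasPath_of_nonseparable [Finite V] (hH : IsNontrivialComponent G C H)
    (hB : Nonseparable G H) (hδ : ∀ v, δ ≤ (G.neighborSet v).ncard)
    (hp : ∀ v ∈ H, v ≠ b → (privateAttachments G C H v).ncard ≤ p) (ha : a ∈ H) (hb : b ∈ H)
    (hab : a ≠ b) :
    ∃ n, max 1 (δ - (multiAttachments G C H).ncard - p) ≤ n ∧ HasPath G H a b n :=
  hB.exists_hasPath_length_ge ha hb hab fun v hv hvb => by
    have := hδ v
    have := hH.ncard_neighborSet_le hv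
    have := hp v hv hvb
    omega

end IsNontrivialComponent

theorem hasDetour_of_mem_privateAttachments {C H : Set V} {b : V} {k : ℕ}
    (hpath : ∀ a ∈ H, a ≠ b → ∃ n, k ≤ n ∧ HasPath G H a b n) :
    ∀ u ∈ privateAttachments G C H b, ∀ v ∈ attachments G C H \ privateAttachments G C H b,
      HasDetour G H k u v := fun u hu v hv => by
  obtain ⟨a, ha, hab, hva⟩ := exists_ne_adj_of_notMem_privateAttachments hv.1 hv.2
  obtain ⟨n, hn, hp⟩ := hpath a ha hab
  exact ⟨b, a, n, hn, hp.symm, (mem_of_mem_privateAttachments hu).1, hva⟩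

namespace IsCyclicGaps

variable {C H : Set V} {c k : ℕ} {next : V → V} {gap : V → ℕ}

theorem multiAttachments_subset_longGaps (h : IsCyclicGaps G C c (attachments G C H) next gap)
    (hHC : Disjoint H C)
    (hpath : ∀ a ∈ H, ∀ b ∈ H, a ≠ b → ∃ n, k ≤ n ∧ HasPath G H a b n) :
    multiAttachments G C H ⊆ longGaps (attachments G C H) gap k := fun u hu => by
  obtain ⟨-, b, hb, hub⟩ := h.next_mem u (multiAttachments_subset hu)
  obtain ⟨a, ha, hab⟩ := hu.2.exists_ne b
  obtain ⟨n, hn, hp⟩ := hpath a ha.2 b hb hab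
  exact h.mem_longGaps hHC (multiAttachments_subset hu) ⟨a, b, n, hn, hp, ha.1, hub⟩

theorem ncard_multiAttachments_add_le_longGaps [Fintype V]
    (h : IsCyclicGaps G C c (attachments G C H) next gap) (hH : IsNontrivialComponent G C H)
    (h3 : KConnected G 3) (hC : 3 ≤ C.ncard)
    (hpath : ∀ a ∈ H, ∀ b ∈ H, a ≠ b → ∃ n, k ≤ n ∧ HasPath G H a b n) :
    (multiAttachments G C H).ncard + {a ∈ H | (privateAttachments G C H a).Nonempty}.ncard ≤
      (longGaps (attachments G C H) gap k).ncard := by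
  have hexit : ∀ a ∈ {a ∈ H | (privateAttachments G C H a).Nonempty},
      ∃ u ∈ privateAttachments G C H a, u ∈ longGaps (attachments G C H) gap k := fun a ha =>
    h.exists_mem_longGaps_of_ssubset hH.disjoint (hH.privateAttachments_ssubset h3 hC) ha.2
      (hasDetour_of_mem_privateAttachments fun b hb => hpath b hb a ha.1)
  choose! exit hexit_mem hexit_long using hexit
  have hinj : Set.InjOn exit {a ∈ H | (privateAttachments G C H a).Nonempty} :=
    fun a ha b hb hab => by_contra fun hne => (disjoint_privateAttachments hne).notMem_of_mem_left
      (hexit_mem a ha) (hab ▸ hexit_mem b hb)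
  have hdisj : Disjoint (multiAttachments G C H)
      (exit '' {a ∈ H | (privateAttachments G C H a).Nonempty}) := by
    rw [Set.disjoint_right]
    rintro _ ⟨a, ha, rfl⟩
    exact disjoint_multiAttachments_privateAttachments.notMem_of_mem_right (hexit_mem a ha)
  rw [← hinj.ncard_image, ← Set.ncard_union_eq hdisj]
  exact Set.ncard_le_ncard (Set.union_subset (h.multiAttachments_subset_longGaps hH.disjoint hpath)
    (Set.image_subset_iff.2 hexit_long))

theorem two_mul_ncard_attachments_add_le [Fintype V] {E F : ℕ} {b : V}
    (h : IsCyclicGaps G C c (attachments G C H) next gap) (hH : IsNontrivialComponent G C H)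
    (h3 : KConnected G 3) (hC : 3 ≤ C.ncard) (hEF : E ≤ F)
    (hF : ∀ a ∈ H, a ≠ b → ∃ n, F ≤ n ∧ HasPath G H a b n)
    (hb : (privateAttachments G C H b).Nonempty ∨ F = E) :
    2 * (attachments G C H).ncard + (longGaps (attachments G C H) gap E).ncard * E +
      2 * (F - E) ≤ c := by
  have hsum := h.two_mul_ncard_add_le hH subset_rfl E (F - E)
  rw [Nat.add_sub_cancel' hEF] at hsum
  rcases hb with hb | rfl
  · have := Nat.mul_le_mul_right (F - E) (h.two_le_ncard_longGaps hH.disjoint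
      (hH.privateAttachments_ssubset h3 hC) hb (hasDetour_of_mem_privateAttachments hF))
    omega
  · omega

end IsCyclicGaps

-- The arithmetic of the block case: `t`, `m`, `p₀ ≥ p₁` and `g` count the attachments, those with
-- several neighbours, the two largest private classes, and the long gaps.
theorem three_mul_le_of_block_bounds {δ t m p₀ p₁ g c E F : ℕ} (ht : m + p₀ + p₁ ≤ t)
    (hE : E = max 1 (δ - m - p₀)) (hF : F = max 1 (δ - m - p₁)) (hp : p₁ ≤ p₀) (hm : m ≤ g)
    (hg : m + p₁ + 2 ≤ δ → 3 ≤ g) (hc : 2 * t + g * E + 2 * (F - E) ≤ c) : 3 * δ ≤ c + 3 := by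
  by_cases hδ : m + p₁ + 2 ≤ δ
  · obtain ⟨g, rfl⟩ := Nat.exists_eq_add_of_le' (hg hδ)
    obtain ⟨E, rfl⟩ := Nat.exists_eq_add_of_le' (show 1 ≤ E by omega)
    rw [show (g + 3) * (E + 1) = g * E + g + 3 * E + 3 by ring] at hc
    have := Nat.zero_le (g * E)
    omega
  · have := Nat.le_mul_of_pos_right g (show 0 < E by omega)
    omega

theorem IsLongestCycleEnum.three_mul_le_of_nonseparable [Fintype V] {f : ℕ → V} {c δ : ℕ}
    {H : Set V} (h : IsLongestCycleEnum G f c) (hH : IsNontrivialComponent G (Set.range f) H)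
    (h3 : KConnected G 3) (hδ : ∀ v, δ ≤ (G.neighborSet v).ncard) (hB : Nonseparable G H) :
    3 * δ ≤ c + 3 := by
  have hC : 3 ≤ (Set.range f).ncard := h.ncard_range ▸ h.three_le
  obtain ⟨next, gap, hgap⟩ := h.exists_isCyclicGaps (T := attachments G (Set.range f) H)
    (fun u hu => hu.1) (Set.one_lt_ncard_iff_nontrivial.1
      (by have := hH.three_le_ncard_attachments h3 hC; omega))
  obtain ⟨b₀, hb₀, hmax₀⟩ := Set.exists_max_image H
    (fun a => (privateAttachments G (Set.range f) H a).ncard) H.toFinite hH.nontrivial.nonempty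
  obtain ⟨b₁, hb₁, hmax₁⟩ := Set.exists_max_image (H \ {b₀})
    (fun a => (privateAttachments G (Set.range f) H a).ncard) (Set.toFinite _)
    (hH.nontrivial.exists_ne b₀)
  have hpathE := fun a ha b hb =>
    hH.exists_hasPath_of_nonseparable (a := a) (b := b) hB hδ (fun v hv _ => hmax₀ v hv) ha hb
  have hpathF := fun a ha =>
    hH.exists_hasPath_of_nonseparable (a := a) hB hδ (fun v hv hvb => hmax₁ v ⟨hv, hvb⟩) ha hb₀
  have hle := hmax₀ b₁ hb₁.1
  have hlong := hgap.ncard_multiAttachments_add_le_longGaps hH h3 hC hpathE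
  refine three_mul_le_of_block_bounds (ncard_multiAttachments_add_le (Ne.symm hb₁.2)) rfl rfl hle
    (by omega) (fun hδ₁ => ?_)
    (hgap.two_mul_ncard_attachments_add_le hH h3 hC (by omega) hpathF ?_)
  · have hH3 : 3 ≤ H.ncard := by
      have := hδ b₁
      have := hH.ncard_neighborSet_le hb₁.1
      have := Set.ncard_lt_ncard (s := G.neighborSet b₁ ∩ H) (t := H)
        ⟨Set.inter_subset_right, fun hsub => G.irrefl (hsub hb₁.1).1⟩
      omega
    exact (hH.three_le_ncard_multiAttachments_add h3 hC hH3).trans hlong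
  · refine (Set.eq_empty_or_nonempty _).symm.imp_right fun hempty => ?_
    rw [hempty, Set.ncard_empty] at hle ⊢
    rw [Nat.le_zero.1 hle]

/-! ### The circumference bound -/

theorem IsLongestCycleEnum.three_mul_le_of_not_isIndepSet_compl [Fintype V] {f : ℕ → V} {c δ : ℕ}
    (h : IsLongestCycleEnum G f c) (hdom : ¬ G.IsIndepSet (Set.range f)ᶜ) (h3 : KConnected G 3)
    (hδ : ∀ v, δ ≤ (G.neighborSet v).ncard) : 3 * δ ≤ c + 3 := by
  obtain ⟨H, hH⟩ := exists_isNontrivialComponent hdom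
  by_cases hsep : Nonseparable G H
  · exact h.three_mul_le_of_nonseparable hH h3 hδ hsep
  · exact h.three_mul_le_of_not_nonseparable hH h3 hδ hsep

theorem le_connectivity_or_exists_isSeparation [Fintype V] {δ : ℕ} (hδ : δ < Fintype.card V) :
    δ ≤ connectivity G ∨ ∃ S A B, S.ncard ≤ connectivity G ∧ IsSeparation G S A B := by
  by_cases hcard : connectivity G + 1 < Fintype.card V
  · exact .inr (exists_isSeparation_of_connectivity_lt hcard)
  · exact .inl (by omega)

end

theorem nikoghosyan_1981_circumference (G : SimpleGraph V) [Fintype V] [DecidableRel G.Adj]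
    (h3 : KConnected G 3) :
    (circumference G : ℤ) ≥
      min (Fintype.card V : ℤ) (3 * G.minDegree - connectivity G) := by
  have : Nonempty V := Fintype.card_pos_iff.1 (by have := h3.1; omega)
  have hδ : ∀ v, G.minDegree ≤ (G.neighborSet v).ncard := fun v => by
    rw [Set.ncard_eq_toFinset_card']
    exact G.minDegree_le_degree v
  have hκ : 3 ≤ connectivity G := h3.le_connectivity
  obtain ⟨f, hf⟩ := h3.exists_isLongestCycleEnum (by omega)
  by_cases hspan : Set.range f = Set.univ
  · have hc := hf.ncard_range
    rw [hspan, Set.ncard_univ, Nat.card_eq_fintype_card] at hc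
    exact min_le_of_left_le (by exact_mod_cast hc.le)
  · have hbound : 3 * G.minDegree ≤ circumference G + connectivity G := by
      by_cases hdom : G.IsIndepSet (Set.range f)ᶜ
      · exact hf.three_mul_le_of_isIndepSet_compl hdom hspan hδ (by omega)
          (le_connectivity_or_exists_isSeparation G.minDegree_lt_card)
      · have := hf.three_mul_le_of_not_isIndepSet_compl hdom h3 hδ
        omega
    exact min_le_of_right_le (by omega)
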